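/- arXiv:1506.06922 — 4 statements merged into one kernel-verified Lean document; each statement's English description precedes it below -/
import Mathlib

section
/- A continuous function f : (0,∞) → (0,∞) is operator monotone if and only if its adjoint f*, defined by f*(x) = 1/f(1/x) for x > 0, is operator monotone. -/
open Matrix
open scoped ComplexOrder

/-- The Loewner order on matrices: `A ≤ B` iff `B - A` is positive semidefinite. -/
def MLE {n : ℕ} (A B : Matrix (Fin n) (Fin n) ℂ) : Prop := (B - A).PosSemidef

/-- The `t`-weighted harmonic mean `A !_t B = ((1-t)A⁻¹ + tB⁻¹)⁻¹`. -/
noncomputable def wharm {n : ℕ} (t : ℝ) (A B : Matrix (Fin n) (Fin n) ℂ) :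
    Matrix (Fin n) (Fin n) ℂ := ((1 - t) • A⁻¹ + t • B⁻¹)⁻¹

/-- The `t`-weighted arithmetic mean `A ∇_t B = (1-t)A + tB`. -/
noncomputable def warith {n : ℕ} (t : ℝ) (A B : Matrix (Fin n) (Fin n) ℂ) :
    Matrix (Fin n) (Fin n) ℂ := (1 - t) • A + t • B

/-- Real powers of a matrix, via the continuous functional calculus. -/
noncomputable def mpow {n : ℕ} (A : Matrix (Fin n) (Fin n) ℂ) (r : ℝ) :
    Matrix (Fin n) (Fin n) ℂ := cfc (fun x : ℝ => x ^ r) A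

/-- The `t`-weighted geometric mean `A #_t B = A^{1/2} (A^{-1/2} B A^{-1/2})^t A^{1/2}`. -/
noncomputable def wgeom {n : ℕ} (t : ℝ) (A B : Matrix (Fin n) (Fin n) ℂ) :
    Matrix (Fin n) (Fin n) ℂ :=
  mpow A (1/2) * mpow (mpow A (-(1/2)) * B * mpow A (-(1/2))) t * mpow A (1/2)

/-- `f` is operator monotone (increasing): order preserving on positive definite
matrices of every size, via the continuous functional calculus. -/
def OperatorMonotone (f : ℝ → ℝ) : Prop :=
  ∀ (n : ℕ) (A B : Matrix (Fin n) (Fin n) ℂ), A.PosDef → B.PosDef →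
    MLE A B → MLE (cfc f A) (cfc f B)

/-- `f` is operator monotone decreasing: order reversing on positive definite
matrices of every size, via the continuous functional calculus. -/
def OperatorAntitone (f : ℝ → ℝ) : Prop :=
  ∀ (n : ℕ) (A B : Matrix (Fin n) (Fin n) ℂ), A.PosDef → B.PosDef →
    MLE A B → MLE (cfc f B) (cfc f A)

open scoped MatrixOrder Matrix.Norms.L2Operator in
theorem aux_inv_anti {n : ℕ} {A B : Matrix (Fin n) (Fin n) ℂ} (hA : A.PosDef) (hB : B.PosDef)
    (h : MLE A B) : MLE B⁻¹ A⁻¹ := by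
  have hA0 : (0 : Matrix (Fin n) (Fin n) ℂ) ≤ A := Matrix.nonneg_iff_posSemidef.mpr hA.posSemidef
  have hAB : A ≤ B := Matrix.le_iff.mpr h
  have := CStarAlgebra.inv_le_inv (a := hA.isUnit.unit) (b := hB.isUnit.unit) hA0 hAB
  rw [Matrix.coe_units_inv, Matrix.coe_units_inv] at this
  exact Matrix.le_iff.mp this

theorem aux_spec {n : ℕ} {A : Matrix (Fin n) (Fin n) ℂ} (hA : A.PosDef) :
    ∀ x ∈ spectrum ℝ A, 0 < x := by
  intro x hx
  rw [hA.1.spectrum_real_eq_range_eigenvalues] at hx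
  obtain ⟨i, rfl⟩ := hx
  exact hA.eigenvalues_pos i

open scoped MatrixOrder in
theorem aux_posDef {n : ℕ} {A : Matrix (Fin n) (Fin n) ℂ} (hA : A.PosDef) (f : ℝ → ℝ)
    (hf : ContinuousOn f (Set.Ioi 0)) (hf' : ∀ x ∈ Set.Ioi (0:ℝ), f x ∈ Set.Ioi (0:ℝ)) :
    (cfc f A).PosDef := by
  have hsa : IsSelfAdjoint A := hA.1
  have hc : ContinuousOn f (spectrum ℝ A) := hf.mono (aux_spec hA)
  have h1 : (cfc f A).PosSemidef := Matrix.nonneg_iff_posSemidef.mp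
    (cfc_nonneg fun x hx => (hf' x (aux_spec hA x hx)).le)
  exact h1.posDef_iff_isUnit.mpr
    ((isUnit_cfc_iff f A).mpr fun x hx => (hf' x (aux_spec hA x hx)).ne')

theorem aux_cfc {n : ℕ} {A : Matrix (Fin n) (Fin n) ℂ} (hA : A.PosDef) (f : ℝ → ℝ)
    (hf : ContinuousOn f (Set.Ioi 0)) (hf' : ∀ x ∈ Set.Ioi (0:ℝ), f x ∈ Set.Ioi (0:ℝ)) :
    cfc (fun x => (f x⁻¹)⁻¹) A = (cfc f A⁻¹)⁻¹ := by
  have hsa : IsSelfAdjoint A := hA.1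
  have hi : ContinuousOn (fun x : ℝ => x⁻¹) (spectrum ℝ A) :=
    continuousOn_inv₀.mono fun x hx => (aux_spec hA x hx).ne'
  have him : ∀ y ∈ (fun x : ℝ => x⁻¹) '' spectrum ℝ A, y ∈ Set.Ioi (0:ℝ) := by
    rintro _ ⟨x, hx, rfl⟩
    exact inv_pos.mpr (aux_spec hA x hx)
  have hc : ContinuousOn (fun x => f x⁻¹) (spectrum ℝ A) :=
    hf.comp hi fun x hx => him _ ⟨x, hx, rfl⟩
  rw [cfc_inv (fun x => f x⁻¹) A (fun x hx => (hf' _ (him _ ⟨x, hx, rfl⟩)).ne') hc hsa,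
    Matrix.nonsing_inv_eq_ringInverse, Matrix.nonsing_inv_eq_ringInverse,
    ← cfc_ringInverse_id (R := ℝ) (a := A) (ha_unit := hA.isUnit) (ha := hsa),
    ← cfc_comp' f (fun x : ℝ => x⁻¹) A (hf.mono him) hi hsa]

theorem aux_main (f : ℝ → ℝ) (hf : ContinuousOn f (Set.Ioi 0))
    (hf' : ∀ x ∈ Set.Ioi (0:ℝ), f x ∈ Set.Ioi (0:ℝ)) (h : OperatorMonotone f) :
    OperatorMonotone (fun x => (f x⁻¹)⁻¹) := by
  intro n A B hA hB hAB
  rw [aux_cfc hA f hf hf', aux_cfc hB f hf hf']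
  exact aux_inv_anti (aux_posDef hB.inv f hf hf') (aux_posDef hA.inv f hf hf')
    (h n _ _ hB.inv hA.inv (aux_inv_anti hA hB hAB))

theorem stmt_0 (f : ℝ → ℝ) (hf : ContinuousOn f (Set.Ioi 0))
    (hf' : ∀ x ∈ Set.Ioi (0:ℝ), f x ∈ Set.Ioi (0:ℝ)) :
    OperatorMonotone f ↔ OperatorMonotone (fun x => (f x⁻¹)⁻¹) := by
  refine ⟨aux_main f hf hf', fun h => ?_⟩
  have hp : ∀ x ∈ Set.Ioi (0:ℝ), x⁻¹ ∈ Set.Ioi (0:ℝ) := fun x hx => Set.mem_Ioi.mpr (inv_pos.mpr (Set.mem_Ioi.mp hx))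
  have hc : ContinuousOn (fun x => (f x⁻¹)⁻¹) (Set.Ioi 0) :=
    ContinuousOn.inv₀ (hf.comp (continuousOn_inv₀.mono fun x hx => ne_of_gt hx) hp)
      fun x hx => ne_of_gt (hf' _ (hp x hx))
  simpa using aux_main _ hc (fun x hx => Set.mem_Ioi.mpr (inv_pos.mpr (Set.mem_Ioi.mp (hf' _ (hp x hx))))) h
end

section
/- A continuous function f : (0,∞) → (0,∞) is operator monotone if and only if f(A ∇ B) ≥ f(A) # f(B) for every n ∈ ℕ and all n×n positive definite complex matrices A, B. -/
open Matrix
open scoped ComplexOrder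

section Helpers
set_option linter.unusedSectionVars false
open scoped MatrixOrder
variable {ι κ : Type*} [Fintype ι] [DecidableEq ι] [Fintype κ] [DecidableEq κ]

lemma h_cont (f : ℝ → ℝ) (A : Matrix ι ι ℂ) : ContinuousOn f (spectrum ℝ A) :=
  A.finite_real_spectrum.continuousOn f

lemma h_sa {A : Matrix ι ι ℂ} (h : A.IsHermitian) : IsSelfAdjoint A := h

lemma h_intertwine (f : ℝ → ℝ) {A : Matrix ι ι ℂ} {B : Matrix κ κ ℂ} (hA : A.IsHermitian)
    (hB : B.IsHermitian) (W : Matrix κ ι ℂ) (h : B * W = W * A) :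
    cfc f B * W = W * cfc f A := by
  classical
  let S : Finset ℝ := A.finite_real_spectrum.toFinset ∪ B.finite_real_spectrum.toFinset
  let p : Polynomial ℝ := Lagrange.interpolate S id f
  have hp : ∀ x ∈ S, p.eval x = f x := fun x hx =>
    Lagrange.eval_interpolate_at_node (v := id) f Function.injective_id.injOn hx
  have h1 : cfc f A = Polynomial.aeval A p := by
    rw [← cfc_polynomial p A hA]
    exact cfc_congr fun x hx => (hp x (by simp [S, hx])).symm
  have h2 : cfc f B = Polynomial.aeval B p := by
    rw [← cfc_polynomial p B hB]
    exact cfc_congr fun x hx => (hp x (by simp [S, hx])).symm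
  rw [h1, h2]
  have hpow : ∀ k : ℕ, B ^ k * W = W * A ^ k := by
    intro k
    induction k with
    | zero => simp
    | succ k ih => rw [pow_succ, Matrix.mul_assoc, h, ← Matrix.mul_assoc, ih, pow_succ, Matrix.mul_assoc]
  generalize p = q
  induction q using Polynomial.induction_on' with
  | add p q hp hq => simp [Matrix.add_mul, Matrix.mul_add, hp, hq]
  | monomial k a =>
    simp [Polynomial.aeval_monomial, Algebra.algebraMap_eq_smul_one, hpow]

lemma h_spec_pos {A : Matrix ι ι ℂ} (h : A.PosDef) : ∀ x ∈ spectrum ℝ A, 0 < x := by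
  intro x hx
  exact (Matrix.isStrictlyPositive_iff_posDef.2 h).spectrum_pos hx

lemma h_cfc_herm (f : ℝ → ℝ) (A : Matrix ι ι ℂ) : (cfc f A).IsHermitian := cfc_predicate f A

lemma h_cfc_id {A : Matrix ι ι ℂ} (h : A.IsHermitian) : cfc (fun x : ℝ => x) A = A :=
  cfc_id' ℝ A h

lemma h_cfc_mono {f g : ℝ → ℝ} {A : Matrix ι ι ℂ} (h : ∀ x ∈ spectrum ℝ A, f x ≤ g x) :
    cfc f A ≤ cfc g A :=
  cfc_mono h (h_cont _ _) (h_cont _ _)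

lemma h_le {A B : Matrix ι ι ℂ} : A ≤ B ↔ (B - A).PosSemidef := Iff.rfl

lemma h_smul_posDef {a : ℝ} (ha : 0 < a) : (a • (1 : Matrix ι ι ℂ)).PosDef :=
  Matrix.PosDef.one.smul ha

lemma h_posDef_iff {A : Matrix ι ι ℂ} :
    A.PosDef ↔ ∃ a : ℝ, 0 < a ∧ a • (1 : Matrix ι ι ℂ) ≤ A := by
  constructor
  · intro h
    obtain ⟨a, ha, h2⟩ : ∃ a : ℝ, 0 < a ∧ ∀ x ∈ spectrum ℝ A, a ≤ x := by
      have h0 := h_spec_pos h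
      have hfin := A.finite_real_spectrum
      generalize spectrum ℝ A = s at h0 hfin
      rcases s.eq_empty_or_nonempty with rfl | hne
      · exact ⟨1, one_pos, by simp⟩
      · obtain ⟨a, ha, hm⟩ := hfin.exists_minimal hne
        refine ⟨a, h0 a ha, fun x hx => ?_⟩
        by_contra hlt
        exact hlt (hm hx (le_of_not_ge hlt))
    refine ⟨a, ha, ?_⟩
    have := algebraMap_le_cfc (fun x => x) a A h2 (h_cont _ A) h.isHermitian
    rw [Algebra.algebraMap_eq_smul_one] at this
    exact this.trans_eq (h_cfc_id h.isHermitian)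
  · rintro ⟨a, ha, h⟩
    have := (h_smul_posDef ha).add_posSemidef (h_le.1 h)
    rwa [add_sub_cancel] at this

lemma h_exists_ub {A : Matrix ι ι ℂ} (h : A.IsHermitian) :
    ∃ a : ℝ, A ≤ a • (1 : Matrix ι ι ℂ) := by
  obtain ⟨a, ha⟩ := A.finite_real_spectrum.bddAbove
  refine ⟨a, ?_⟩
  have := cfc_le_algebraMap (fun x => x) a A (fun x hx => ha hx) (h_cont _ A) h
  rw [Algebra.algebraMap_eq_smul_one] at this
  exact (h_cfc_id h).symm.trans_le this

lemma h_cfc_posDef {f : ℝ → ℝ} {A : Matrix ι ι ℂ} (hA : A.PosDef)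
    (hf : ∀ x, 0 < x → 0 < f x) : (cfc f A).PosDef := by
  rw [← Matrix.isStrictlyPositive_iff_posDef]
  refine (cfc_isStrictlyPositive_iff f A (h_cont _ A) hA.isHermitian).2 ?_
  exact fun x hx => hf x (h_spec_pos hA x hx)

lemma h_posDef_mono {A B : Matrix ι ι ℂ} (hA : A.PosDef) (h : A ≤ B) : B.PosDef := by
  have := hA.add_posSemidef (h_le.1 h)
  rwa [add_sub_cancel] at this

lemma h_conj {A B : Matrix ι ι ℂ} (h : A ≤ B) (W : Matrix ι κ ℂ) :
    Wᴴ * A * W ≤ Wᴴ * B * W := by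
  have := (h_le.1 h).conjTranspose_mul_mul_same W
  rw [Matrix.mul_sub, Matrix.sub_mul] at this
  exact this

lemma h_smul_le {A B : Matrix ι ι ℂ} (h : A ≤ B) {r : ℝ} (hr : 0 ≤ r) : r • A ≤ r • B := by
  rw [h_le, ← smul_sub]
  exact (h_le.1 h).smul hr

lemma h_inv_anti {A B : Matrix ι ι ℂ} (hA : A.PosDef) (h : A ≤ B) : B⁻¹ ≤ A⁻¹ := by
  open scoped Matrix.Norms.L2Operator in
  have hB := h_posDef_mono hA h
  obtain ⟨a, rfl⟩ := hA.isUnit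
  obtain ⟨b, rfl⟩ := hB.isUnit
  have := CStarAlgebra.inv_le_inv (a := a) (b := b) (Matrix.nonneg_iff_posSemidef.2 hA.posSemidef) h
  simpa using this

lemma h_le_of_eps {A B : Matrix ι ι ℂ} (h : ∀ δ : ℝ, 0 < δ → A ≤ B + δ • (1 : Matrix ι ι ℂ)) : A ≤ B := by
  rw [h_le]
  have key : ∀ δ : ℝ, 0 < δ → (B - A + δ • (1 : Matrix ι ι ℂ)).PosSemidef := fun δ hδ => by
    have := h_le.1 (h δ hδ)
    rwa [add_sub_right_comm] at this
  have hH : (B - A).IsHermitian := by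
    have := (key 1 one_pos).isHermitian.sub (Matrix.isHermitian_one (n := ι) (α := ℂ))
    simpa using this
  refine Matrix.PosSemidef.of_dotProduct_mulVec_nonneg hH fun x => ?_
  have h1 : ∀ δ : ℝ, 0 < δ → 0 ≤ star x ⬝ᵥ ((B - A) *ᵥ x) + δ * (star x ⬝ᵥ x) := fun δ hδ => by
    have := (key δ hδ).dotProduct_mulVec_nonneg x
    rw [Matrix.add_mulVec, dotProduct_add, Matrix.smul_mulVec, Matrix.one_mulVec, dotProduct_smul] at this
    simpa using this
  have ht : Filter.Tendsto (fun δ : ℝ => star x ⬝ᵥ ((B - A) *ᵥ x) + (δ : ℂ) * (star x ⬝ᵥ x))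
      (nhdsWithin 0 (Set.Ioi 0)) (nhds (star x ⬝ᵥ ((B - A) *ᵥ x) + ((0 : ℝ) : ℂ) * (star x ⬝ᵥ x))) := by
    apply Filter.Tendsto.mono_left _ nhdsWithin_le_nhds
    apply Continuous.tendsto
    fun_prop
  simp only [Complex.ofReal_zero, zero_mul, add_zero] at ht
  exact ge_of_tendsto ht (Filter.eventually_of_mem self_mem_nhdsWithin fun δ hδ => h1 δ hδ)

lemma h_cfc_mul (f g : ℝ → ℝ) (A : Matrix ι ι ℂ) :
    cfc f A * cfc g A = cfc (fun x => f x * g x) A :=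
  (cfc_mul f g A (h_cont _ _) (h_cont _ _)).symm

lemma h_cfc_congr {f g : ℝ → ℝ} {A : Matrix ι ι ℂ} (h : ∀ x ∈ spectrum ℝ A, f x = g x) :
    cfc f A = cfc g A := cfc_congr h

lemma h_cfc_one {A : Matrix ι ι ℂ} (h : A.IsHermitian) : cfc (fun _ : ℝ => (1 : ℝ)) A = 1 :=
  cfc_const_one ℝ A h

lemma h_cfc_lin {A : Matrix ι ι ℂ} (h : A.IsHermitian) (a b : ℝ) (f : ℝ → ℝ) :
    cfc (fun x : ℝ => a * f x + b) A = a • cfc f A + b • (1 : Matrix ι ι ℂ) := by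
  have h1 := cfc_add_const b (fun x => a * f x) A (h_cont _ _) h
  rw [h1, Algebra.algebraMap_eq_smul_one]
  congr 1
  exact cfc_const_mul a f A (h_cont _ _)

lemma h_cfc_inv {f : ℝ → ℝ} {A : Matrix ι ι ℂ} (hA : A.PosDef) (hf : ∀ x, 0 < x → 0 < f x) :
    (cfc f A)⁻¹ = cfc (fun x => (f x)⁻¹) A := by
  apply Matrix.inv_eq_right_inv
  rw [h_cfc_mul, ← h_cfc_one hA.isHermitian]
  exact h_cfc_congr fun x hx => mul_inv_cancel₀ (hf x (h_spec_pos hA x hx)).ne'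

lemma h_mpow {n : ℕ} {A : Matrix (Fin n) (Fin n) ℂ} (hA : A.PosDef) (r s : ℝ) :
    mpow A r * mpow A s = mpow A (r + s) := by
  unfold mpow
  rw [h_cfc_mul]
  exact h_cfc_congr fun x hx => (Real.rpow_add (h_spec_pos hA x hx) r s).symm

lemma h_mpow_zero {n : ℕ} {A : Matrix (Fin n) (Fin n) ℂ} (hA : A.PosDef) : mpow A 0 = 1 := by
  unfold mpow
  simp only [Real.rpow_zero]
  exact h_cfc_one hA.isHermitian

lemma h_mpow_one {n : ℕ} {A : Matrix (Fin n) (Fin n) ℂ} (hA : A.PosDef) : mpow A 1 = A := by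
  unfold mpow
  simp only [Real.rpow_one]
  exact h_cfc_id hA.isHermitian

lemma h_mpow_posDef {n : ℕ} {A : Matrix (Fin n) (Fin n) ℂ} (hA : A.PosDef) (r : ℝ) :
    (mpow A r).PosDef := h_cfc_posDef hA fun _ hx => Real.rpow_pos_of_pos hx r

lemma h_mpow_half_le {n : ℕ} {A : Matrix (Fin n) (Fin n) ℂ} (hA : A.PosDef) (r : ℝ) :
    mpow A r ≤ (2⁻¹ : ℝ) • (1 + mpow A (2 * r)) := by
  have h := h_cfc_lin hA.isHermitian 2⁻¹ 2⁻¹ (fun x : ℝ => x ^ (2 * r))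
  have : (2⁻¹ : ℝ) • (1 + mpow A (2 * r)) = cfc (fun x : ℝ => 2⁻¹ * x ^ (2 * r) + 2⁻¹) A := by
    rw [h, smul_add, add_comm]; rfl
  rw [this]
  refine h_cfc_mono fun x hx => ?_
  have hx := h_spec_pos hA x hx
  have : x ^ (2 * r) = (x ^ r) ^ 2 := by
    rw [mul_comm, Real.rpow_mul hx.le]; simp
  rw [this]
  nlinarith [sq_nonneg (x ^ r - 1)]

lemma h_geom {n : ℕ} {C D : Matrix (Fin n) (Fin n) ℂ} (hC : C.PosDef) (hD : D.PosDef) :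
    ∃ P Q R S X : Matrix (Fin n) (Fin n) ℂ, P * P = C ∧ P * Q = 1 ∧ Q * P = 1 ∧ Pᴴ = P ∧ Qᴴ = Q ∧
      R.PosDef ∧ R * S = 1 ∧ R ≤ (2⁻¹ : ℝ) • (1 + X) ∧ S ≤ (2⁻¹ : ℝ) • (1 + X⁻¹) ∧
      X = Q * D * Q ∧ wgeom 2⁻¹ C D = P * R * P := by
  have hQ := h_mpow_posDef hC (-(1/2))
  have hX : (mpow C (-(1/2)) * D * mpow C (-(1/2))).PosDef := by
    have := hD.conjTranspose_mul_mul_same (B := mpow C (-(1/2)))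
      (Matrix.mulVec_injective_iff_isUnit.2 hQ.isUnit)
    rwa [hQ.isHermitian.eq] at this
  refine ⟨mpow C (1/2), mpow C (-(1/2)), mpow (mpow C (-(1/2)) * D * mpow C (-(1/2))) 2⁻¹,
    mpow (mpow C (-(1/2)) * D * mpow C (-(1/2))) (-2⁻¹), _, ?_, ?_, ?_,
    (h_mpow_posDef hC _).isHermitian.eq, hQ.isHermitian.eq,
    h_mpow_posDef hX _, ?_, ?_, ?_, rfl, rfl⟩
  · rw [h_mpow hC]; norm_num [h_mpow_one hC]
  · rw [h_mpow hC]; norm_num [h_mpow_zero hC]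
  · rw [h_mpow hC]; norm_num [h_mpow_zero hC]
  · rw [h_mpow hX]; norm_num [h_mpow_zero hX]
  · have := h_mpow_half_le hX 2⁻¹
    rw [show (2 : ℝ) * 2⁻¹ = 1 by norm_num, h_mpow_one hX] at this
    exact this
  · have := h_mpow_half_le hX (-2⁻¹)
    have e : (mpow C (-(1/2)) * D * mpow C (-(1/2)))⁻¹
        = mpow (mpow C (-(1/2)) * D * mpow C (-(1/2))) (2 * -2⁻¹) := by
      apply Matrix.inv_eq_right_inv
      nth_rewrite 1 [← h_mpow_one hX]
      rw [h_mpow hX]; norm_num [h_mpow_zero hX]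
    rw [e]
    exact this

lemma h_geom_le {n : ℕ} {C D : Matrix (Fin n) (Fin n) ℂ} (hC : C.PosDef) (hD : D.PosDef) :
    wgeom 2⁻¹ C D ≤ (2⁻¹ : ℝ) • (C + D) := by
  obtain ⟨P, Q, R, S, X, hPP, hPQ, hQP, hP, hQ, hR, hRS, h1, h2, hX, hg⟩ := h_geom hC hD
  rw [hg]
  have := h_conj h1 P
  rw [hP] at this
  refine this.trans_eq ?_
  rw [Matrix.mul_smul, Matrix.smul_mul, Matrix.mul_add, Matrix.add_mul, Matrix.mul_one, hPP, hX]
  congr 2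
  calc P * (Q * D * Q) * P = (P * Q) * D * (Q * P) := by simp only [Matrix.mul_assoc]
    _ = D := by simp [hPQ, hQP]

lemma h_geom_inv {n : ℕ} {C D E : Matrix (Fin n) (Fin n) ℂ} (hC : C.PosDef) (hD : D.PosDef)
    (h : wgeom 2⁻¹ C D ≤ E) : E⁻¹ ≤ (2⁻¹ : ℝ) • (C⁻¹ + D⁻¹) := by
  obtain ⟨P, Q, R, S, X, hPP, hPQ, hQP, hP, hQ, hR, hRS, h1, h2, hX, hg⟩ := h_geom hC hD
  rw [hg] at h
  have hpd : (P * R * P).PosDef := by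
    have := hR.conjTranspose_mul_mul_same (B := P)
      (Matrix.mulVec_injective_iff_isUnit.2 (IsUnit.of_mul_eq_one Q hPQ))
    rwa [hP] at this
  refine (h_inv_anti hpd h).trans ?_
  have e1 : (P * R * P)⁻¹ = Q * S * Q := by
    apply Matrix.inv_eq_right_inv
    calc P * R * P * (Q * S * Q) = P * R * (P * Q) * S * Q := by simp only [Matrix.mul_assoc]
      _ = P * (R * S) * Q := by rw [hPQ]; simp [Matrix.mul_assoc]
      _ = 1 := by simp [hRS, hPQ]
  have hDu : D * D⁻¹ = 1 := Matrix.mul_nonsing_inv _ ((Matrix.isUnit_iff_isUnit_det _).1 hD.isUnit)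
  have e2 : X⁻¹ = P * D⁻¹ * P := by
    apply Matrix.inv_eq_right_inv
    calc X * (P * D⁻¹ * P) = Q * D * (Q * P) * D⁻¹ * P := by rw [hX]; simp only [Matrix.mul_assoc]
      _ = Q * (D * D⁻¹) * P := by rw [hQP]; simp [Matrix.mul_assoc]
      _ = 1 := by simp [hDu, hQP]
  have e3 : C⁻¹ = Q * Q := by
    apply Matrix.inv_eq_right_inv
    calc C * (Q * Q) = P * (P * Q) * Q := by rw [← hPP]; simp only [Matrix.mul_assoc]
      _ = 1 := by simp [hPQ]
  rw [e1]
  have := h_conj h2 Q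
  rw [hQ] at this
  refine this.trans_eq ?_
  rw [Matrix.mul_smul, Matrix.smul_mul, Matrix.mul_add, Matrix.add_mul, Matrix.mul_one, e2, e3]
  congr 2
  calc Q * (P * D⁻¹ * P) * Q = (Q * P) * D⁻¹ * (P * Q) := by simp only [Matrix.mul_assoc]
    _ = D⁻¹ := by simp [hPQ, hQP]

lemma h_opmono_gen {f : ℝ → ℝ} (hf : OperatorMonotone f) {A B : Matrix ι ι ℂ} (hA : A.PosDef)
    (h : A ≤ B) : cfc f A ≤ cfc f B := by
  have hB := h_posDef_mono hA h
  let e := Fintype.equivFin ι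
  let W : Matrix (Fin (Fintype.card ι)) ι ℂ := (1 : Matrix ι ι ℂ).submatrix e.symm id
  have key : ∀ M : Matrix ι ι ℂ, M.IsHermitian →
      (cfc f (M.submatrix e.symm e.symm)).submatrix e e = cfc f M := by
    intro M hM
    have h2 : ∀ N : Matrix ι ι ℂ, W * N = N.submatrix e.symm id := fun N => by
      ext i j; simp [W, Matrix.mul_apply, Matrix.one_apply]
    have h3 : ∀ N : Matrix (Fin (Fintype.card ι)) (Fin (Fintype.card ι)) ℂ,
        N * W = N.submatrix id e := fun N => by
      ext i j; simp [W, Matrix.mul_apply, Matrix.one_apply, Equiv.symm_apply_eq]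
    have h1 := h_intertwine f hM (hM.submatrix e.symm) W (by rw [h2, h3]; ext i j; simp)
    rw [h2, h3] at h1
    have := congrArg (fun N => N.submatrix e id) h1
    ext i j
    simpa using congrFun (congrFun this i) j
  have := hf _ (A.submatrix e.symm e.symm) (B.submatrix e.symm e.symm)
    (hA.submatrix e.symm.injective) (hB.submatrix e.symm.injective)
    ((h_le.1 h).submatrix e.symm)
  rw [h_le, ← key A hA.isHermitian, ← key B hB.isHermitian]
  exact Matrix.PosSemidef.submatrix this e

lemma h_smul_one_mono {a b : ℝ} (h : a ≤ b) : a • (1 : Matrix ι ι ℂ) ≤ b • (1 : Matrix ι ι ℂ) := by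
  rw [h_le, ← sub_smul]
  exact Matrix.PosSemidef.one.smul (sub_nonneg.2 h)

lemma h_concave_eps {f : ℝ → ℝ} (hf : OperatorMonotone f) {A B : Matrix ι ι ℂ} (hA : A.PosDef)
    (hB : B.PosDef) {ε : ℝ} (hε : 0 < ε) :
    (2⁻¹ : ℝ) • (cfc f A + cfc f B) ≤
      cfc f ((2⁻¹ : ℝ) • (A + B) + ε • (1 : Matrix ι ι ℂ)) := by
  set M : Matrix ι ι ℂ := (2⁻¹ : ℝ) • (A + B) with hM
  set K : Matrix ι ι ℂ := (2⁻¹ : ℝ) • (B - A) with hK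
  have hMK : M - K = A := by rw [hM, hK]; module
  have hMK' : M + K = B := by rw [hM, hK]; module
  have hMh : M.IsHermitian := by
    rw [hM]; exact (hA.isHermitian.add hB.isHermitian).smul (IsSelfAdjoint.all _)
  have hKh : K.IsHermitian := by
    rw [hK]; exact (hB.isHermitian.sub hA.isHermitian).smul (IsSelfAdjoint.all _)
  let W1 : Matrix (ι ⊕ ι) ι ℂ := Matrix.fromRows 1 (-1)
  let W2 : Matrix (ι ⊕ ι) ι ℂ := Matrix.fromRows 1 1
  let J : Matrix (ι ⊕ ι) ι ℂ := Matrix.fromRows 1 0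
  let H : Matrix (ι ⊕ ι) (ι ⊕ ι) ℂ := Matrix.fromBlocks M K K M
  have hH : H.PosDef := by
    obtain ⟨a, ha, ha'⟩ := h_posDef_iff.1 hA
    obtain ⟨b, hb, hb'⟩ := h_posDef_iff.1 hB
    have hc := lt_min ha hb
    set c := min a b
    have h1 := h_le.1 ((h_smul_one_mono (min_le_left a b)).trans ha')
    have h2 := h_le.1 ((h_smul_one_mono (min_le_right a b)).trans hb')
    refine h_posDef_iff.2 ⟨c, hc, ?_⟩
    have h3 := ((h1.mul_mul_conjTranspose_same W1).add (h2.mul_mul_conjTranspose_same W2)).smul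
      (show (0 : ℝ) ≤ 2⁻¹ by norm_num)
    rw [h_le]
    convert h3 using 1
    rw [← hMK, ← hMK', ← Matrix.fromBlocks_one]
    have q1 : ∀ (Y : Matrix ι ι ℂ), W1 * Y * W1ᴴ = Matrix.fromBlocks Y (-Y) (-Y) Y := fun Y => by
      rw [Matrix.conjTranspose_fromRows_eq_fromCols_conjTranspose, Matrix.fromRows_mul,
        Matrix.fromRows_mul_fromCols]
      simp
    have q2 : ∀ (Y : Matrix ι ι ℂ), W2 * Y * W2ᴴ = Matrix.fromBlocks Y Y Y Y := fun Y => by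
      rw [Matrix.conjTranspose_fromRows_eq_fromCols_conjTranspose, Matrix.fromRows_mul,
        Matrix.fromRows_mul_fromCols]
      simp
    rw [q1, q2]
    simp only [H, sub_eq_add_neg, Matrix.fromBlocks_smul, Matrix.fromBlocks_add,
      Matrix.fromBlocks_inj, Matrix.fromBlocks_neg, smul_zero]
    refine ⟨?_, ?_, ?_, ?_⟩ <;> module
  obtain ⟨l, hl⟩ := h_exists_ub (A := M + K * (ε • (1 : Matrix ι ι ℂ))⁻¹ * K) (by
    refine hMh.add ?_
    have := Matrix.isHermitian_conjTranspose_mul_mul K (h_smul_posDef (ι := ι) hε).inv.isHermitian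
    rwa [hKh.eq] at this)
  let L : Matrix (ι ⊕ ι) (ι ⊕ ι) ℂ :=
    Matrix.fromBlocks (M + ε • (1 : Matrix ι ι ℂ)) 0 0 (l • (1 : Matrix ι ι ℂ))
  have hHL : H ≤ L := by
    rw [h_le]
    have e : L - H = Matrix.fromBlocks (ε • (1 : Matrix ι ι ℂ)) (-K) (-K)ᴴ
        (l • (1 : Matrix ι ι ℂ) - M) := by
      simp [L, H, sub_eq_add_neg, Matrix.fromBlocks_neg, Matrix.fromBlocks_add, hKh.eq]
    rw [e]
    have hp := h_smul_posDef (ι := ι) hε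
    have := hp.isUnit.invertible
    have h4 := h_le.1 hl
    refine (Matrix.PosDef.fromBlocks₁₁ _ _ hp).2 ?_
    have e5 : l • (1 : Matrix ι ι ℂ) - (M + K * (ε • (1 : Matrix ι ι ℂ))⁻¹ * K) =
        l • (1 : Matrix ι ι ℂ) - M - (-K)ᴴ * (ε • (1 : Matrix ι ι ℂ))⁻¹ * (-K) := by
      simp only [conjTranspose_neg, hKh.eq, Matrix.neg_mul, Matrix.mul_neg, neg_neg, sub_sub]
    rw [e5] at h4
    exact h4
  have hL := h_posDef_mono hH hHL
  have hmain := h_conj (h_opmono_gen hf hH hHL) J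
  have i1 := h_intertwine f hA.isHermitian hH.isHermitian W1 (by
    simp only [H, W1, Matrix.fromBlocks_mul_fromRows, Matrix.fromRows_mul, ← hMK]
    congr 1 <;> simp <;> abel)
  have i2 := h_intertwine f hB.isHermitian hH.isHermitian W2 (by
    simp only [H, W2, Matrix.fromBlocks_mul_fromRows, Matrix.fromRows_mul, ← hMK']
    congr 1 <;> simp <;> abel)
  have i3 := h_intertwine f (hMh.add (h_smul_posDef hε).isHermitian) hL.isHermitian J (by
    simp only [L, J, Matrix.fromBlocks_mul_fromRows, Matrix.fromRows_mul]
    congr 1 <;> simp)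
  have hJ : J = (2⁻¹ : ℝ) • (W1 + W2) := by
    ext i j
    rcases i with i | i <;> simp [J, W1, W2]
    ring
  have j1 : Jᴴ * W1 = 1 := by
    simp [J, W1, Matrix.conjTranspose_fromRows_eq_fromCols_conjTranspose, Matrix.fromCols_mul_fromRows]
  have j2 : Jᴴ * W2 = 1 := by
    simp [J, W2, Matrix.conjTranspose_fromRows_eq_fromCols_conjTranspose, Matrix.fromCols_mul_fromRows]
  have j3 : Jᴴ * J = 1 := by
    simp [J, Matrix.conjTranspose_fromRows_eq_fromCols_conjTranspose, Matrix.fromCols_mul_fromRows]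
  have k1 : Jᴴ * cfc f H * J = (2⁻¹ : ℝ) • (cfc f A + cfc f B) := by
    have : cfc f H * J = (2⁻¹ : ℝ) • (W1 * cfc f A + W2 * cfc f B) := by
      rw [hJ, Matrix.mul_smul, Matrix.mul_add, i1, i2]
    rw [Matrix.mul_assoc, this, Matrix.mul_smul, Matrix.mul_add, ← Matrix.mul_assoc,
      ← Matrix.mul_assoc, j1, j2, Matrix.one_mul, Matrix.one_mul]
  have k2 : Jᴴ * cfc f L * J = cfc f (M + ε • (1 : Matrix ι ι ℂ)) := by
    rw [Matrix.mul_assoc, i3, ← Matrix.mul_assoc, j3, Matrix.one_mul]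
  rwa [k1, k2] at hmain

lemma h_concave {f : ℝ → ℝ} (hc : ContinuousOn f (Set.Ioi 0)) (hf : OperatorMonotone f)
    {A B : Matrix ι ι ℂ} (hA : A.PosDef) (hB : B.PosDef) :
    (2⁻¹ : ℝ) • (cfc f A + cfc f B) ≤ cfc f ((2⁻¹ : ℝ) • (A + B)) := by
  have hM : ((2⁻¹ : ℝ) • (A + B)).PosDef := (hA.add hB).smul (by norm_num)
  have hpos := h_spec_pos hM
  have heps := fun ε (hε : 0 < ε) => h_concave_eps hf hA hB (ε := ε) hε
  generalize (2⁻¹ : ℝ) • (A + B) = M at *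
  refine h_le_of_eps fun δ hδ => ?_
  have hev : ∀ᶠ ε in nhdsWithin (0 : ℝ) (Set.Ioi 0), ∀ x ∈ spectrum ℝ M, f (x + ε) ≤ f x + δ := by
    rw [Set.Finite.eventually_all M.finite_real_spectrum]
    intro x hx
    have h1 : ContinuousAt f x := hc.continuousAt (Ioi_mem_nhds (hpos x hx))
    have h2 : Filter.Tendsto (fun ε : ℝ => f (x + ε)) (nhdsWithin (0 : ℝ) (Set.Ioi 0)) (nhds (f x)) := by
      have h3 : Filter.Tendsto (fun ε : ℝ => x + ε) (nhds 0) (nhds x) := by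
        have : Continuous fun ε : ℝ => x + ε := by fun_prop
        simpa using this.tendsto 0
      exact (h1.tendsto.comp h3).mono_left nhdsWithin_le_nhds
    filter_upwards [h2.eventually_lt_const (show f x < f x + δ by linarith)] with ε h using h.le
  obtain ⟨ε, h1, hε⟩ := (hev.and self_mem_nhdsWithin).exists
  refine (heps ε hε).trans ?_
  have hMh := hM.isHermitian
  have e1 : M + ε • (1 : Matrix ι ι ℂ) = cfc (fun x : ℝ => x + ε) M := by
    have := h_cfc_lin hMh 1 ε (fun x => x)
    simp only [one_mul, one_smul] at this
    rw [this, h_cfc_id hMh]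
  have e2 : cfc f (M + ε • (1 : Matrix ι ι ℂ)) = cfc (fun x : ℝ => f (x + ε)) M := by
    rw [e1]
    exact (cfc_comp' f (fun x : ℝ => x + ε) M
      ((M.finite_real_spectrum.image _).continuousOn _) (h_cont _ _) hMh).symm
  have e3 := h_cfc_lin hMh 1 δ f
  simp only [one_mul, one_smul] at e3
  rw [e2, ← e3]
  exact h_cfc_mono h1

lemma h_cfc_scalar (f : ℝ → ℝ) (x : ℝ) :
    cfc f (x • (1 : Matrix ι ι ℂ)) = f x • (1 : Matrix ι ι ℂ) := by
  have := cfc_algebraMap (A := Matrix ι ι ℂ) x f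
  simpa only [Algebra.algebraMap_eq_smul_one] using this

lemma h_eigen (f : ℝ → ℝ) {A : Matrix ι ι ℂ} (hA : A.IsHermitian) (l : ℝ) (w : ι → ℂ)
    (h : A *ᵥ w = l • w) : cfc f A *ᵥ w = f l • w := by
  let W : Matrix ι Unit ℂ := Matrix.of fun i _ => w i
  have h1 : ∀ (M : Matrix ι ι ℂ) i, (M * W) i () = (M *ᵥ w) i := fun M i => by
    simp [W, Matrix.mul_apply, Matrix.mulVec, dotProduct]
  have h2 : ∀ (r : ℝ) i, (W * (r • (1 : Matrix Unit Unit ℂ))) i () = (r • w) i := fun r i => by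
    simp [W]
  have := h_intertwine f (A := l • (1 : Matrix Unit Unit ℂ)) (B := A)
    (Matrix.isHermitian_one.smul (IsSelfAdjoint.all _)) hA W (by
      ext i j; rw [h1, h2, h])
  rw [h_cfc_scalar] at this
  ext i
  rw [← h1, ← h2, this]

lemma h_smul_one_le {ι : Type*} [Fintype ι] [DecidableEq ι] (i : ι) {a b : ℝ}
    (h : a • (1 : Matrix ι ι ℂ) ≤ b • (1 : Matrix ι ι ℂ)) : a ≤ b := by
  have := (h_le.1 h).diag_nonneg (i := i)
  simpa [Complex.le_def] using this

section Backward
variable {f : ℝ → ℝ} (hf' : ∀ x ∈ Set.Ioi (0:ℝ), f x ∈ Set.Ioi (0:ℝ))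
  (hG : ∀ (n : ℕ) (A B : Matrix (Fin n) (Fin n) ℂ), A.PosDef → B.PosDef →
        MLE (wgeom 2⁻¹ (cfc f A) (cfc f B)) (cfc f ((2⁻¹ : ℝ) • (A + B))))
include hf' hG

lemma h_scalar {x h : ℝ} (hx : 0 < x) (hh : 0 < h) : f x * f (x + 2 * h) ≤ f (x + h) ^ 2 := by
  have h1 := hG 1 (x • 1) ((x + 2 * h) • 1) (h_smul_posDef hx) (h_smul_posDef (by linarith))
  have e : (2⁻¹ : ℝ) • (x • (1 : Matrix (Fin 1) (Fin 1) ℂ) + (x + 2 * h) • (1 : Matrix (Fin 1) (Fin 1) ℂ))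
      = (x + h) • 1 := by module
  have ha : 0 < f x := hf' x hx
  have hb : 0 < f (x + 2 * h) := hf' (x + 2 * h) (show 0 < x + 2 * h by linarith)
  have hc : 0 < f (x + h) := hf' (x + h) (show 0 < x + h by linarith)
  rw [e, h_cfc_scalar, h_cfc_scalar, h_cfc_scalar] at h1
  generalize f x = a at *
  generalize f (x + 2 * h) = b at *
  generalize f (x + h) = c at *
  unfold wgeom mpow at h1
  simp only [h_cfc_scalar, Matrix.smul_mul, Matrix.mul_smul, Matrix.one_mul, Matrix.mul_one, smul_smul] at h1
  have h2 := h_smul_one_le 0 h1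
  have hs : a ^ (1/2 : ℝ) = √a := (Real.sqrt_eq_rpow a).symm
  have hs' : a ^ (-(1/2) : ℝ) = (√a)⁻¹ := by rw [Real.rpow_neg ha.le, hs]
  have hr : ∀ y : ℝ, y ^ (2⁻¹ : ℝ) = √y := fun y => by rw [Real.sqrt_eq_rpow]; norm_num
  rw [hs, hs', hr] at h2
  have hsa := Real.sqrt_pos.2 ha
  have hsq := Real.sq_sqrt ha.le
  generalize √a = s at *
  have hnn : 0 ≤ s⁻¹ * (s⁻¹ * b) := by positivity
  have hn2 : 0 ≤ s⁻¹ * (b * s⁻¹) := by positivity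
  have hn3 : 0 ≤ b * s⁻¹ * s⁻¹ := by positivity
  have key : ∀ z : ℝ, 0 ≤ z → z = b / a → s * s * √z ≤ c → a * b ≤ c ^ 2 := by
    intro z hz hzz hle
    have h3 : (s * s * √z) ^ 2 ≤ c ^ 2 := pow_le_pow_left₀ (by positivity) hle 2
    have h4 : (s * s * √z) ^ 2 = a * b := by
      rw [mul_pow, Real.sq_sqrt hz, hzz, ← sq, hsq]; field_simp
    linarith
  refine key (s⁻¹ * (s⁻¹ * b)) hnn ?_ ?_
  · rw [← hsq]; field_simp
  · convert h2 using 1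
    ring_nf

lemma h_convex {n : ℕ} {A B : Matrix (Fin n) (Fin n) ℂ} (hA : A.PosDef) (hB : B.PosDef) :
    cfc (fun x => (f x)⁻¹) ((2⁻¹ : ℝ) • (A + B)) ≤
      (2⁻¹ : ℝ) • (cfc (fun x => (f x)⁻¹) A + cfc (fun x => (f x)⁻¹) B) := by
  rw [← h_cfc_inv hA hf', ← h_cfc_inv hB hf',
    ← h_cfc_inv (A := (2⁻¹ : ℝ) • (A + B)) ((hA.add hB).smul (by norm_num)) hf']
  exact h_geom_inv (h_cfc_posDef hA hf') (h_cfc_posDef hB hf') (hG n A B hA hB)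

lemma h_growth : ∃ c : ℝ, ∀ t : ℝ, 2 ≤ t → (f (t + 3))⁻¹ ≤ c * (t ^ 2 + 1) := by
  let g : ℝ → ℝ := fun x => (f x)⁻¹
  have hg : ∀ x, 0 < x → 0 < g x := fun x hx => inv_pos.2 (hf' x hx)
  let B : Matrix (Fin 2) (Fin 2) ℂ := !![2, 2; 2, 4]
  have hB : B.PosDef := by
    have h1 : B = (!![1, 1; 0, 1] : Matrix (Fin 2) (Fin 2) ℂ)ᴴ * !![2, 0; 0, 2] * !![1, 1; 0, 1] := by
      ext i j; fin_cases i <;> fin_cases j <;> simp [B, Matrix.mul_apply, Fin.sum_univ_two] <;> norm_num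
    rw [h1]
    have h2 : (!![2, 0; 0, 2] : Matrix (Fin 2) (Fin 2) ℂ) = (2 : ℝ) • 1 := by
      ext i j; fin_cases i <;> fin_cases j <;> simp
    rw [h2]
    refine (h_smul_posDef two_pos).conjTranspose_mul_mul_same
      (Matrix.mulVec_injective_iff_isUnit.2 ?_)
    rw [Matrix.isUnit_iff_isUnit_det]
    simp
  let Y0 := cfc g B
  refine ⟨2⁻¹ * (g 2 + (Y0 1 1).re), fun t ht => ?_⟩
  have ht0 : (t : ℂ) ≠ 0 := by
    have : t ≠ 0 := by linarith
    exact_mod_cast this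
  let p : ℝ := t + 3 - t⁻¹
  have htinv : t⁻¹ ≤ 1 := inv_le_one_of_one_le₀ (by linarith)
  let A : Matrix (Fin 2) (Fin 2) ℂ := Matrix.diagonal ![((2 * p - 2 : ℝ) : ℂ), 2]
  have hA : A.PosDef := by
    refine Matrix.PosDef.diagonal fun i => ?_
    fin_cases i
    · have : (0 : ℝ) < 2 * p - 2 := by simp only [p]; linarith
      simpa using (Complex.zero_lt_real.2 this)
    · simp
  have hX : (2⁻¹ : ℝ) • (A + B) = !![(p : ℂ), 1; 1, 3] := by
    ext i j; fin_cases i <;> fin_cases j <;> simp [A, B] <;> norm_num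
  have hXh : ((2⁻¹ : ℝ) • (A + B)).PosDef := (hA.add hB).smul (by norm_num)
  have hc := h_convex hf' hG hA hB
  rw [hX] at hc hXh
  have hA1 := h_eigen g hA.isHermitian 2 ![0, 1] (by
    ext i; fin_cases i <;> simp [A, Matrix.mulVec, dotProduct, Fin.sum_univ_two])
  have hX1 := h_eigen g hXh.isHermitian (t + 3) ![(t : ℂ), 1] (by
    ext i; fin_cases i <;> simp [p, Matrix.mulVec, dotProduct, Fin.sum_univ_two] <;> field_simp <;> ring)
  have hX2 := h_eigen g hXh.isHermitian (3 - t⁻¹) ![-1, (t : ℂ)] (by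
    ext i; fin_cases i <;> simp [p, Matrix.mulVec, dotProduct, Fin.sum_univ_two] <;> field_simp <;> ring)
  have hpos : 0 < g (3 - t⁻¹) := hg _ (by linarith)
  change cfc g _ ≤ _ • (cfc g A + cfc g B) at hc
  have hd := (h_le.1 hc).diag_nonneg (i := 1)
  generalize cfc g !![(p : ℂ), 1; 1, 3] = X at *
  have a1 := congrFun hA1 1
  have a2 := congrFun hX1 1
  have a3 := congrFun hX2 1
  simp [Matrix.mulVec, dotProduct, Fin.sum_univ_two] at a1 a2 a3
  have a4 : X 1 1 * ((t : ℂ) ^ 2 + 1) = ((g (t + 3) + g (3 - t⁻¹) * t ^ 2 : ℝ) : ℂ) := by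
    push_cast
    linear_combination a2 + t * a3
  have a5 : (X 1 1).re * (t ^ 2 + 1) = g (t + 3) + g (3 - t⁻¹) * t ^ 2 := by
    have h6 : X 1 1 * ((t : ℂ) ^ 2 + 1) = X 1 1 * ((t ^ 2 + 1 : ℝ) : ℂ) := by push_cast; rfl
    rw [h6] at a4
    have := congrArg Complex.re a4
    rwa [Complex.re_mul_ofReal, Complex.ofReal_re] at this
  have hd' := (Complex.le_def.1 hd).1
  simp [a1] at hd'
  have hd2 : (X 1 1).re ≤ 2⁻¹ * (g 2 + (Y0 1 1).re) := by
    rw [mul_add]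
    exact hd'
  have h7 := mul_le_mul_of_nonneg_right hd2 (show 0 ≤ t ^ 2 + 1 by positivity)
  have h8 : 0 ≤ g (3 - t⁻¹) * t ^ 2 := by positivity
  change g (t + 3) ≤ _
  linarith

lemma h_mono_scalar {x y : ℝ} (hx : 0 < x) (hxy : x ≤ y) : f x ≤ f y := by
  rcases hxy.eq_or_lt with rfl | hlt
  · exact le_rfl
  by_contra hcon
  push Not at hcon
  obtain ⟨h, hh, rfl⟩ : ∃ h, 0 < h ∧ y = x + h := ⟨y - x, by linarith, by ring⟩
  have fp : ∀ k : ℕ, 0 < f (x + k * h) := fun k => hf' _ (show 0 < x + k * h by positivity)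
  have hfx : 0 < f x := hf' x hx
  set r := f (x + h) / f x with hr
  have hr1 : r < 1 := (div_lt_one hfx).2 hcon
  have hr0 : 0 < r := div_pos (hf' _ (show 0 < x + h by linarith)) hfx
  have step : ∀ k : ℕ, f (x + (k + 1 : ℕ) * h) ≤ r * f (x + k * h) := by
    intro k
    induction k with
    | zero => simp [hr, hfx.ne']
    | succ k ih =>
      have h1 := h_scalar hf' hG (x := x + k * h) (h := h) (by positivity) hh
      have e1 : x + k * h + 2 * h = x + (k + 1 + 1 : ℕ) * h := by push_cast; ring
      have e2 : x + k * h + h = x + (k + 1 : ℕ) * h := by push_cast; ring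
      rw [e1, e2] at h1
      have p0 := fp k
      have p1 := fp (k + 1)
      refine le_of_mul_le_mul_left ?_ p0
      nlinarith
  have hk : ∀ k : ℕ, f (x + k * h) ≤ r ^ k * f x := by
    intro k
    induction k with
    | zero => simp
    | succ k ih =>
      calc _ ≤ r * f (x + k * h) := step k
        _ ≤ r * (r ^ k * f x) := by gcongr
        _ = _ := by ring
  obtain ⟨c, hc⟩ := h_growth hf' hG
  -- eventually `1 ≤ c * ((x + k h)^2 + 1) * r^k * f x`
  have ht : Filter.Tendsto (fun k : ℕ => c * ((x + k * h - 3) ^ 2 + 1) * (r ^ k * f x))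
      Filter.atTop (nhds 0) := by
    have t0 := tendsto_pow_const_mul_const_pow_of_abs_lt_one 0 (r := r) (by rw [abs_of_pos hr0]; exact hr1)
    have t1 := tendsto_pow_const_mul_const_pow_of_abs_lt_one 1 (r := r) (by rw [abs_of_pos hr0]; exact hr1)
    have t2 := tendsto_pow_const_mul_const_pow_of_abs_lt_one 2 (r := r) (by rw [abs_of_pos hr0]; exact hr1)
    have := ((t0.const_mul (c * f x * ((x - 3) ^ 2 + 1))).add
      (t1.const_mul (c * f x * (2 * (x - 3) * h)))).add (t2.const_mul (c * f x * h ^ 2))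
    simp only [mul_zero, add_zero] at this
    refine this.congr fun k => ?_
    ring
  have hlarge : ∀ᶠ k : ℕ in Filter.atTop, 5 ≤ x + k * h := by
    have : Filter.Tendsto (fun k : ℕ => x + k * h) Filter.atTop Filter.atTop :=
      Filter.tendsto_atTop_add_const_left _ _ (tendsto_natCast_atTop_atTop.atTop_mul_const hh)
    exact this.eventually_ge_atTop 5
  obtain ⟨k, h1, h2⟩ := ((ht.eventually_lt_const one_pos).and hlarge).exists
  have h3 := hc (x + k * h - 3) (by linarith)
  rw [sub_add_cancel] at h3
  have p0 := fp k
  have h4 : 1 ≤ c * ((x + k * h - 3) ^ 2 + 1) * f (x + k * h) := by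
    rwa [inv_le_iff_one_le_mul₀ p0] at h3
  have h5 : 0 ≤ c * ((x + k * h - 3) ^ 2 + 1) := (inv_pos.2 p0).le.trans h3
  have := mul_le_mul_of_nonneg_left (hk k) h5
  linarith

lemma h_backward {n : ℕ} {A B : Matrix (Fin n) (Fin n) ℂ} (hA : A.PosDef) (hB : B.PosDef)
    (hAB : A ≤ B) : cfc f A ≤ cfc f B := by
  have hg : ∀ x, 0 < x → 0 < (f x)⁻¹ := fun x hx => inv_pos.2 (hf' x hx)
  have hgg := @h_convex f hf' hG n
  suffices h : cfc (fun x => (f x)⁻¹) B ≤ cfc (fun x => (f x)⁻¹) A by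
    have h1 := h_inv_anti (h_cfc_posDef hB hg) h
    rw [h_cfc_inv hA hg, h_cfc_inv hB hg] at h1
    simpa only [inv_inv] using h1
  obtain ⟨D, hD, rfl⟩ : ∃ D : Matrix (Fin n) (Fin n) ℂ, D.PosSemidef ∧ B = A + D :=
    ⟨B - A, h_le.1 hAB, by abel⟩
  obtain ⟨a, ha, haA⟩ := h_posDef_iff.1 hA
  have hle : ∀ r : ℝ, 0 ≤ r → A ≤ A + r • D := fun r hr => by
    rw [h_le, add_sub_cancel_left]; exact hD.smul hr
  have hub : ∀ r : ℝ, 0 ≤ r → cfc (fun x => (f x)⁻¹) (A + r • D) ≤ (f a)⁻¹ • (1 : Matrix (Fin n) (Fin n) ℂ) := by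
    intro r hr
    have hpd := h_posDef_mono hA (hle r hr)
    have h1 := haA.trans (hle r hr)
    have h2 : ∀ x ∈ spectrum ℝ (A + r • D), a ≤ x := by
      rw [← Algebra.algebraMap_eq_smul_one] at h1
      exact (algebraMap_le_iff_le_spectrum (ha := hpd.isHermitian)).1 h1
    have h3 := h_cfc_mono (A := A + r • D) (f := fun x => (f x)⁻¹) (g := fun x => 0 * x + (f a)⁻¹)
      fun x hx => by
        simp only [zero_mul, zero_add]
        exact inv_anti₀ (hf' a ha) (h_mono_scalar hf' hG ha (h2 x hx))
    rw [h_cfc_lin hpd.isHermitian 0 (f a)⁻¹ (fun x => x)] at h3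
    simpa using h3
  have hmain : ∀ k : ℕ, cfc (fun x => (f x)⁻¹) (A + D) ≤
      (1 - (2⁻¹ : ℝ) ^ k) • cfc (fun x => (f x)⁻¹) A +
        ((2⁻¹ : ℝ) ^ k) • cfc (fun x => (f x)⁻¹) (A + (2 ^ k : ℝ) • D) := by
    intro k
    induction k with
    | zero => simp
    | succ k ih =>
      refine ih.trans ?_
      have h1 := hgg hA (h_posDef_mono hA (hle (2 ^ (k + 1)) (by positivity)))
      have e : (2⁻¹ : ℝ) • (A + (A + (2 ^ (k + 1) : ℝ) • D)) = A + (2 ^ k : ℝ) • D := by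
        rw [pow_succ]; module
      rw [e] at h1
      refine (add_le_add_right (h_smul_le h1 (show (0 : ℝ) ≤ 2⁻¹ ^ k by positivity)) _).trans_eq ?_
      rw [pow_succ (2⁻¹ : ℝ)]
      module
  refine h_le_of_eps fun δ hδ => ?_
  have ht : Filter.Tendsto (fun k : ℕ => (2⁻¹ : ℝ) ^ k * (f a)⁻¹) Filter.atTop (nhds (0 * (f a)⁻¹)) :=
    (tendsto_pow_atTop_nhds_zero_of_lt_one (by norm_num) (by norm_num)).mul_const _
  rw [zero_mul] at ht
  obtain ⟨k, hk⟩ := (ht.eventually_lt_const hδ).exists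
  refine (hmain k).trans (add_le_add ?_ ?_)
  · rw [h_le]
    have := (h_cfc_posDef hA hg).posSemidef.smul (show (0 : ℝ) ≤ 2⁻¹ ^ k by positivity)
    convert this using 1
    module
  · refine (h_smul_le (hub (2 ^ k) (by positivity)) (by positivity)).trans ?_
    rw [smul_smul]
    exact h_smul_one_mono hk.le

end Backward
end Helpers

theorem stmt_3 (f : ℝ → ℝ) (hf : ContinuousOn f (Set.Ioi 0))
    (hf' : ∀ x ∈ Set.Ioi (0:ℝ), f x ∈ Set.Ioi (0:ℝ)) :
    OperatorMonotone f ↔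
      ∀ (n : ℕ) (A B : Matrix (Fin n) (Fin n) ℂ), A.PosDef → B.PosDef →
        MLE (wgeom 2⁻¹ (cfc f A) (cfc f B)) (cfc f ((2⁻¹ : ℝ) • (A + B))) := by
  open scoped MatrixOrder in
  constructor
  · intro h n A B hA hB
    exact (h_geom_le (h_cfc_posDef hA hf') (h_cfc_posDef hB hf')).trans (h_concave hf h hA hB)
  · intro h n A B hA hB hAB
    exact h_backward hf' h hA hB hAB
end

section
/- A continuous function f : (0,∞) → (0,∞) is operator monotone if and only if f(A ! B) ≤ f(A) # f(B) for every n ∈ ℕ and all n×n positive definite complex matrices A, B. -/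
open Matrix
open scoped ComplexOrder

section Aux
set_option linter.unusedSectionVars false
open scoped MatrixOrder
open Filter Topology

variable {m k : Type*} [Fintype m] [DecidableEq m] [Fintype k] [DecidableEq k]

lemma spec_finite (A : Matrix m m ℂ) (hA : A.IsHermitian) : (spectrum ℝ A).Finite := by
  rw [hA.spectrum_real_eq_range_eigenvalues]; exact Set.finite_range _

lemma spec_cont (A : Matrix m m ℂ) (hA : A.IsHermitian) (f : ℝ → ℝ) :
    ContinuousOn f (spectrum ℝ A) := (spec_finite A hA).continuousOn f

lemma pd_spec {A : Matrix m m ℂ} (hA : A.PosDef) : ∀ x ∈ spectrum ℝ A, 0 < x := by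
  intro x hx
  rw [hA.1.spectrum_real_eq_range_eigenvalues] at hx
  obtain ⟨i, rfl⟩ := hx
  exact hA.eigenvalues_pos i

lemma pd_of_spec {A : Matrix m m ℂ} (hA : A.IsHermitian) (h : ∀ x ∈ spectrum ℝ A, 0 < x) :
    A.PosDef := by
  rw [hA.posDef_iff_eigenvalues_pos]
  intro i
  exact h _ (hA.eigenvalues_mem_spectrum_real i)

lemma cfc_herm (f : ℝ → ℝ) (A : Matrix m m ℂ) : (cfc f A).IsHermitian :=
  cfc_predicate f A

lemma cfc_pd {A : Matrix m m ℂ} (hA : A.PosDef) (f : ℝ → ℝ) (h : ∀ x, 0 < x → 0 < f x) :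
    (cfc f A).PosDef := by
  refine pd_of_spec (cfc_herm f A) fun x hx => ?_
  have e : spectrum ℝ (cfc f A) = f '' spectrum ℝ A :=
    cfc_map_spectrum f A hA.1 (spec_cont A hA.1 f)
  rw [e] at hx
  obtain ⟨y, hy, rfl⟩ := hx
  exact h _ (pd_spec hA y hy)

lemma interp (s : Set ℝ) (hs : s.Finite) (f : ℝ → ℝ) :
    ∃ p : Polynomial ℝ, ∀ x ∈ s, p.eval x = f x := by
  refine ⟨Lagrange.interpolate hs.toFinset id f, fun x hx => ?_⟩
  have := Lagrange.eval_interpolate_at_node (s := hs.toFinset) (v := id) f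
    (Set.injOn_id _) (i := x) (by simpa using hx)
  simpa using this

lemma cfc_aeval_eq {A : Matrix m m ℂ} (hA : A.IsHermitian) (f : ℝ → ℝ) (p : Polynomial ℝ)
    (hp : ∀ x ∈ spectrum ℝ A, p.eval x = f x) : cfc f A = Polynomial.aeval A p := by
  rw [← cfc_polynomial p A hA]
  exact cfc_congr fun x hx => (hp x hx).symm

lemma aeval_inter {X : Matrix m m ℂ} {Y : Matrix k k ℂ} (K : Matrix k m ℂ) (h : Y * K = K * X)
    (p : Polynomial ℝ) : Polynomial.aeval Y p * K = K * Polynomial.aeval X p := by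
  induction p using Polynomial.induction_on' with
  | add p q hp hq => simp [Matrix.add_mul, Matrix.mul_add, hp, hq]
  | monomial n a =>
    have : Y ^ n * K = K * X ^ n := by
      induction n with
      | zero => simp
      | succ n ih => rw [pow_succ, pow_succ', Matrix.mul_assoc, h, ← Matrix.mul_assoc, ih,
          Matrix.mul_assoc, ← pow_succ, ← pow_succ']
    simp only [Polynomial.aeval_monomial, Algebra.algebraMap_eq_smul_one, smul_mul_assoc, one_mul]
    rw [Matrix.smul_mul, this, Matrix.mul_smul]

/-- functional calculus respects intertwiners -/
lemma cfc_inter {X : Matrix m m ℂ} {Y : Matrix k k ℂ} (hX : X.IsHermitian) (hY : Y.IsHermitian)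
    (K : Matrix k m ℂ) (h : Y * K = K * X) (f : ℝ → ℝ) : cfc f Y * K = K * cfc f X := by
  obtain ⟨p, hp⟩ := interp (spectrum ℝ X ∪ spectrum ℝ Y) ((spec_finite X hX).union (spec_finite Y hY)) f
  rw [cfc_aeval_eq hX f p fun x hx => hp x (Or.inl hx),
    cfc_aeval_eq hY f p fun x hx => hp x (Or.inr hx)]
  exact aeval_inter K h p

lemma pd_mul_inv {A : Matrix m m ℂ} (hA : A.PosDef) : A * A⁻¹ = 1 :=
  Matrix.mul_nonsing_inv A ((Matrix.isUnit_iff_isUnit_det A).1 hA.isUnit)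
lemma pd_inv_mul {A : Matrix m m ℂ} (hA : A.PosDef) : A⁻¹ * A = 1 :=
  Matrix.nonsing_inv_mul A ((Matrix.isUnit_iff_isUnit_det A).1 hA.isUnit)
lemma pd_inv_inv {A : Matrix m m ℂ} (hA : A.PosDef) : A⁻¹⁻¹ = A :=
  Matrix.nonsing_inv_nonsing_inv A ((Matrix.isUnit_iff_isUnit_det A).1 hA.isUnit)

lemma inv_anti {X Y : Matrix m m ℂ} (hX : X.PosDef) (hY : Y.PosDef) (h : (Y - X).PosSemidef) :
    (X⁻¹ - Y⁻¹).PosSemidef := by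
  have e : X⁻¹ - Y⁻¹ = Y⁻¹ * ((Y - X) * X⁻¹ * (Y - X)) * Y⁻¹ + Y⁻¹ * (Y - X) * Y⁻¹ := by
    have h1 := pd_mul_inv hX
    have h2 := pd_inv_mul hX
    have h3 := pd_mul_inv hY
    have h4 := pd_inv_mul hY
    have a1 : (Y - X) * X⁻¹ * (Y - X) + (Y - X) = Y * X⁻¹ * Y - Y := by
      have : (Y - X) * X⁻¹ * (Y - X) = Y * X⁻¹ * Y - Y * (X⁻¹ * X) - (X * X⁻¹) * Y + (X * X⁻¹) * X := by
        noncomm_ring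
      rw [this, h1, h2]; noncomm_ring
    calc X⁻¹ - Y⁻¹ = (Y⁻¹ * Y) * X⁻¹ * (Y * Y⁻¹) - (Y⁻¹ * Y) * Y⁻¹ := by rw [h3, h4]; simp
      _ = Y⁻¹ * (Y * X⁻¹ * Y - Y) * Y⁻¹ := by noncomm_ring
      _ = _ := by rw [← a1]; noncomm_ring
  have hYi := hY.inv.1
  have hD := h.1
  rw [e]
  refine Matrix.PosSemidef.add ?_ ?_
  · have h1 := (hX.inv.posSemidef.mul_mul_conjTranspose_same (Y - X)).mul_mul_conjTranspose_same Y⁻¹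
    rwa [hYi, hD] at h1
  · have h1 := h.mul_mul_conjTranspose_same Y⁻¹
    rwa [hYi] at h1

/-! facts on square roots -/
lemma mpow_facts {n : ℕ} {P : Matrix (Fin n) (Fin n) ℂ} (hP : P.PosDef) :
    (mpow P (1/2)).PosDef ∧ (mpow P (-(1/2))).PosDef ∧ mpow P (1/2) * mpow P (1/2) = P ∧
    mpow P (1/2) * mpow P (-(1/2)) = 1 ∧ mpow P (-(1/2)) * mpow P (1/2) = 1 := by
  have c := fun f => spec_cont P hP.1 f
  have hs := pd_spec hP
  refine ⟨cfc_pd hP _ fun x hx => Real.rpow_pos_of_pos hx _,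
    cfc_pd hP _ fun x hx => Real.rpow_pos_of_pos hx _, ?_, ?_, ?_⟩
  · unfold mpow
    rw [← cfc_mul _ _ P (c _) (c _)]
    conv_rhs => rw [← cfc_id ℝ P hP.1]
    refine cfc_congr fun x hx => ?_
    simp only [id]
    rw [← Real.rpow_add (hs x hx)]; norm_num
  · unfold mpow
    rw [← cfc_mul _ _ P (c _) (c _), ← cfc_one ℝ P hP.1]
    refine cfc_congr fun x hx => ?_
    simp only [Pi.one_apply]
    rw [← Real.rpow_add (hs x hx)]; norm_num
  · unfold mpow
    rw [← cfc_mul _ _ P (c _) (c _), ← cfc_one ℝ P hP.1]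
    refine cfc_congr fun x hx => ?_
    simp only [Pi.one_apply]
    rw [← Real.rpow_add (hs x hx)]; norm_num

lemma wgeom_facts {n : ℕ} {P Q : Matrix (Fin n) (Fin n) ℂ} (hP : P.PosDef) (hQ : Q.PosDef) :
    ∃ R R' S : Matrix (Fin n) (Fin n) ℂ, R.IsHermitian ∧ R'.IsHermitian ∧ S.PosDef ∧
      R * R' = 1 ∧ R' * R = 1 ∧ P = R * R ∧ Q = R * (S * S) * R ∧ wgeom 2⁻¹ P Q = R * S * R := by
  obtain ⟨h1, h2, h3, h4, h5⟩ := mpow_facts hP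
  set R := mpow P (1/2) with hR
  set R' := mpow P (-(1/2)) with hR'
  have hC : (R' * Q * R').PosDef := by
    have := (Matrix.IsUnit.posDef_star_right_conjugate_iff (x := Q) h2.isUnit).2 hQ
    rwa [Matrix.star_eq_conjTranspose, h2.1.eq] at this
  obtain ⟨g1, -, g3, -, -⟩ := mpow_facts hC
  refine ⟨R, R', mpow (R' * Q * R') (1/2), h1.1, h2.1, g1, h4, h5, h3.symm, ?_, ?_⟩
  · rw [g3]
    calc Q = (R * R') * Q * (R' * R) := by rw [h4, h5]; simp
      _ = _ := by noncomm_ring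
  · unfold wgeom
    rw [← hR, ← hR', show (2⁻¹ : ℝ) = 1/2 by norm_num]

lemma psd_rsmul {A : Matrix m m ℂ} (hA : A.PosSemidef) {t : ℝ} (ht : 0 ≤ t) :
    (t • A).PosSemidef := hA.smul ht

lemma pd_rsmul {A : Matrix m m ℂ} (hA : A.PosDef) {t : ℝ} (ht : 0 < t) :
    (t • A).PosDef := hA.smul ht

lemma geom_am {n : ℕ} {P Q : Matrix (Fin n) (Fin n) ℂ} (hP : P.PosDef) (hQ : Q.PosDef)
    {t : ℝ} (ht : 0 < t) :
    ((t / 2) • P + (t⁻¹ / 2) • Q - wgeom 2⁻¹ P Q).PosSemidef := by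
  obtain ⟨R, R', S, hR, hR', hS, h1, h2, h3, h4, h5⟩ := wgeom_facts hP hQ
  have e : (t / 2) • P + (t⁻¹ / 2) • Q - wgeom 2⁻¹ P Q =
      (t⁻¹ / 2) • ((R * (t • 1 - S)) * (R * (t • 1 - S))ᴴ) := by
    rw [h5, h3, h4, Matrix.conjTranspose_mul, hR.eq, Matrix.conjTranspose_sub, hS.1.eq,
      Matrix.conjTranspose_smul]
    simp only [Matrix.conjTranspose_one, star_trivial, mul_sub, sub_mul, mul_smul_comm,
      smul_mul_assoc, mul_one, one_mul, smul_sub, smul_smul, mul_assoc]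
    have : t⁻¹ / 2 * (t * t) = t / 2 := by field_simp
    have h6 : t⁻¹ / 2 * t = 1 / 2 := by field_simp
    rw [this, h6]
    module
  rw [e]
  exact psd_rsmul (Matrix.posSemidef_self_mul_conjTranspose _) (by positivity)

lemma geom_lower {n : ℕ} {P Q G : Matrix (Fin n) (Fin n) ℂ} (hP : P.PosDef) (hQ : Q.PosDef)
    (h : ∀ X Y : Matrix (Fin n) (Fin n) ℂ, X + Y = 1 →
      ((2:ℝ) • (Xᴴ * P * X) + (2:ℝ) • (Yᴴ * Q * Y) - G).PosSemidef) :
    (wgeom 2⁻¹ P Q - G).PosSemidef := by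
  obtain ⟨R, R', S, hR, hR', hS, h1, h2, h3, h4, h5⟩ := wgeom_facts hP hQ
  have hS1 : (1 + S).PosDef := Matrix.PosDef.one.add hS
  obtain ⟨Z, hZ⟩ : ∃ Z, Z = (1 + S)⁻¹ := ⟨_, rfl⟩
  have hZh : Z.IsHermitian := hZ ▸ hS1.inv.1
  have z1 : (1 + S) * Z = 1 := hZ ▸ pd_mul_inv hS1
  have z2 : Z * (1 + S) = 1 := hZ ▸ pd_inv_mul hS1
  have z3 : Z * S = S * Z := by
    have a : Z + S * Z = 1 := by rw [← z1]; noncomm_ring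
    have b : Z + Z * S = 1 := by rw [← z2]; noncomm_ring
    exact add_left_cancel (b.trans a.symm)
  have key := h (R' * (S * Z) * R) (R' * Z * R) (by
    calc _ = R' * ((1 + S) * Z) * R := by noncomm_ring
      _ = 1 := by rw [z1, mul_one, h2])
  have e1 : (R' * (S * Z) * R)ᴴ * P * (R' * (S * Z) * R) = R * (Z * (S * S) * Z) * R := by
    simp only [Matrix.conjTranspose_mul, hR.eq, hR'.eq, hS.1.eq, hZh.eq, h3]
    calc _ = R * (Z * S) * (R' * R) * (R * R') * (S * Z) * R := by noncomm_ring
      _ = _ := by rw [h1, h2]; noncomm_ring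
  have e2 : (R' * Z * R)ᴴ * Q * (R' * Z * R) = R * (Z * (S * S) * Z) * R := by
    simp only [Matrix.conjTranspose_mul, hR.eq, hR'.eq, hZh.eq, h4]
    calc _ = R * Z * (R' * R) * (S * S) * (R * R') * Z * R := by noncomm_ring
      _ = _ := by rw [h1, h2]; noncomm_ring
  rw [e1, e2] at key
  have key2 : (wgeom 2⁻¹ P Q - ((2:ℝ) • (R * (Z * (S * S) * Z) * R) +
      (2:ℝ) • (R * (Z * (S * S) * Z) * R))).PosSemidef := by
    have hh := (hS.posSemidef.mul_mul_conjTranspose_same (1 - S)).mul_mul_conjTranspose_same (R * Z)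
    have e3 : (R * Z) * ((1 - S) * S * (1 - S)ᴴ) * (R * Z)ᴴ =
       wgeom 2⁻¹ P Q - ((2:ℝ) • (R * (Z * (S * S) * Z) * R) +
      (2:ℝ) • (R * (Z * (S * S) * Z) * R)) := by
      rw [Matrix.conjTranspose_mul, hR.eq, hZh.eq, Matrix.conjTranspose_sub, hS.1.eq,
        Matrix.conjTranspose_one, h5]
      have : R * S * R = R * ((Z * (1 + S)) * S * ((1 + S) * Z)) * R := by
        rw [z1, z2]; simp
      rw [this, ← add_smul, show (2:ℝ) + 2 = ((4:ℕ):ℝ) by norm_num, Nat.cast_smul_eq_nsmul]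
      noncomm_ring
    rwa [e3] at hh
  have := key2.add key
  convert this using 1
  abel

lemma opmono_gen {f : ℝ → ℝ} (h : OperatorMonotone f) {A B : Matrix m m ℂ} (hA : A.PosDef)
    (hB : B.PosDef) (hAB : (B - A).PosSemidef) : (cfc f B - cfc f A).PosSemidef := by
  let e := Fintype.equivFin m
  have key : ∀ C : Matrix m m ℂ, C.IsHermitian →
      cfc f (C.submatrix e.symm e.symm) = (cfc f C).submatrix e.symm e.symm := by
    intro C hC
    have hh : ∀ C : Matrix m m ℂ, C.submatrix e.symm e.symm *
        (1 : Matrix m m ℂ).submatrix e.symm id = (1 : Matrix m m ℂ).submatrix e.symm id * C := by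
      intro C
      ext i j
      simp [Matrix.mul_apply, Matrix.one_apply, e]
      rw [Finset.sum_eq_single (e j)] <;> simp [e]
      intro b hb hb'
      exact (hb (by rw [← hb']; simp)).elim
    have h1 := cfc_inter hC (hC.submatrix e.symm) _ (hh C) f
    rw [← hh (cfc f C)] at h1
    have h2 := congrArg (fun M => M * (1 : Matrix m m ℂ).submatrix id e.symm) h1
    have h3 : (1 : Matrix m m ℂ).submatrix e.symm id * (1 : Matrix m m ℂ).submatrix id e.symm = 1 := by
      ext i j
      simp [Matrix.mul_apply, Matrix.one_apply, e]
    simpa only [mul_assoc, Matrix.mul_assoc, h3, Matrix.mul_one] using h2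
  have := h _ (A.submatrix e.symm e.symm) (B.submatrix e.symm e.symm)
    (hA.submatrix e.symm.injective) (hB.submatrix e.symm.injective)
    (hAB.submatrix e.symm)
  unfold MLE at this
  rw [key A hA.1, key B hB.1] at this
  exact (Matrix.posSemidef_submatrix_equiv e.symm).1 this

lemma cfc_inv_inter {X : Matrix m m ℂ} {Y : Matrix k k ℂ} (hX : X.PosDef) (hY : Y.PosDef)
    (K : Matrix k m ℂ) (h : Y * K = K * X) (f : ℝ → ℝ) : cfc f Y⁻¹ * K = K * cfc f X⁻¹ := by
  refine cfc_inter hX.inv.1 hY.inv.1 K ?_ f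
  calc Y⁻¹ * K = Y⁻¹ * (K * X) * X⁻¹ := by
        rw [Matrix.mul_assoc, Matrix.mul_assoc, pd_mul_inv hX, Matrix.mul_one]
    _ = K * X⁻¹ := by rw [← h, ← Matrix.mul_assoc, pd_inv_mul hY, Matrix.one_mul]

lemma fwd_eps {n : ℕ} {f : ℝ → ℝ} (hf' : ∀ x, 0 < x → 0 < f x) (h : OperatorMonotone f)
    {A B : Matrix (Fin n) (Fin n) ℂ} (hA : A.PosDef) (hB : B.PosDef) {ε : ℝ} (hε : 0 < ε)
    (X Y : Matrix (Fin n) (Fin n) ℂ) (hXY : X + Y = 1) :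
    ((2:ℝ) • (Xᴴ * cfc f A⁻¹ * X) + (2:ℝ) • (Yᴴ * cfc f B⁻¹ * Y) -
      cfc f ((2⁻¹:ℝ) • (A + B) + ε • (1 : Matrix (Fin n) (Fin n) ℂ))⁻¹).PosSemidef := by
  obtain ⟨M, hM⟩ : ∃ M, M = (2⁻¹:ℝ) • (A + B) := ⟨_, rfl⟩
  obtain ⟨D, hD⟩ : ∃ D, D = (2⁻¹:ℝ) • (A - B) := ⟨_, rfl⟩
  have hMp : M.PosDef := hM ▸ pd_rsmul (hA.add hB) (by norm_num)
  have hDh : Dᴴ = D := by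
    rw [hD, Matrix.conjTranspose_smul, Matrix.conjTranspose_sub, hA.1.eq, hB.1.eq]; simp
  have hA' : M + D = A := by rw [hM, hD]; module
  have hB' : M - D = B := by rw [hM, hD]; module
  rw [← hM]
  let K1 : Matrix (Fin n ⊕ Fin n) (Fin n) ℂ := Matrix.fromRows 1 1
  let K2 : Matrix (Fin n ⊕ Fin n) (Fin n) ℂ := Matrix.fromRows 1 (-1)
  let J1 : Matrix (Fin n ⊕ Fin n) (Fin n) ℂ := Matrix.fromRows 1 0
  let J2 : Matrix (Fin n ⊕ Fin n) (Fin n) ℂ := Matrix.fromRows 0 1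
  let N : Matrix (Fin n ⊕ Fin n) (Fin n ⊕ Fin n) ℂ := Matrix.fromBlocks M D D M
  let C := M + ε⁻¹ • (D * D)
  let Me := M + ε • (1 : Matrix (Fin n) (Fin n) ℂ)
  let L : Matrix (Fin n ⊕ Fin n) (Fin n ⊕ Fin n) ℂ := Matrix.fromBlocks Me 0 0 C
  have hCp : C.PosDef := by
    refine hMp.add_posSemidef (psd_rsmul ?_ (by positivity))
    have := Matrix.posSemidef_self_mul_conjTranspose D
    rwa [hDh] at this
  have hMep : Me.PosDef := hMp.add (pd_rsmul Matrix.PosDef.one hε)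
  have n1 : N * K1 = K1 * A := by
    simp only [N, K1, Matrix.fromBlocks_mul_fromRows, Matrix.fromRows_mul, Matrix.mul_one,
      Matrix.one_mul]
    rw [add_comm D M, hA']
  have n2 : N * K2 = K2 * B := by
    simp only [N, K2, Matrix.fromBlocks_mul_fromRows, Matrix.fromRows_mul, Matrix.mul_one,
      Matrix.one_mul, Matrix.mul_neg, Matrix.neg_mul]
    rw [← sub_eq_add_neg, ← sub_eq_add_neg, hB', ← hB', neg_sub]
  have l1 : L * J1 = J1 * Me := by
    simp [L, J1, Matrix.fromBlocks_mul_fromRows, Matrix.fromRows_mul]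
  have l2 : L * J2 = J2 * C := by
    simp [L, J2, Matrix.fromBlocks_mul_fromRows, Matrix.fromRows_mul]
  have k11 : K1ᴴ * K1 = (2:ℝ) • 1 := by
    simp [K1, Matrix.conjTranspose_fromRows_eq_fromCols_conjTranspose, Matrix.fromCols_mul_fromRows]
    module
  have k22 : K2ᴴ * K2 = (2:ℝ) • 1 := by
    simp [K2, Matrix.conjTranspose_fromRows_eq_fromCols_conjTranspose, Matrix.fromCols_mul_fromRows]
    module
  have k12 : K1ᴴ * K2 = 0 := by
    simp [K1, K2, Matrix.conjTranspose_fromRows_eq_fromCols_conjTranspose, Matrix.fromCols_mul_fromRows]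
  have k21 : K2ᴴ * K1 = 0 := by
    simp [K1, K2, Matrix.conjTranspose_fromRows_eq_fromCols_conjTranspose, Matrix.fromCols_mul_fromRows]
  have j11 : J1ᴴ * J1 = 1 := by
    simp [J1, Matrix.conjTranspose_fromRows_eq_fromCols_conjTranspose, Matrix.fromCols_mul_fromRows]
  have j22 : J2ᴴ * J2 = 1 := by
    simp [J2, Matrix.conjTranspose_fromRows_eq_fromCols_conjTranspose, Matrix.fromCols_mul_fromRows]
  have j12 : J1ᴴ * J2 = 0 := by
    simp [J1, J2, Matrix.conjTranspose_fromRows_eq_fromCols_conjTranspose, Matrix.fromCols_mul_fromRows]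
  have j21 : J2ᴴ * J1 = 0 := by
    simp [J1, J2, Matrix.conjTranspose_fromRows_eq_fromCols_conjTranspose, Matrix.fromCols_mul_fromRows]
  have kk : (2⁻¹:ℝ) • (K1 * K1ᴴ) + (2⁻¹:ℝ) • (K2 * K2ᴴ) = 1 := by
    simp only [K1, K2, Matrix.conjTranspose_fromRows_eq_fromCols_conjTranspose,
      Matrix.fromRows_mul_fromCols, Matrix.fromBlocks_smul, Matrix.fromBlocks_add,
      ← Matrix.fromBlocks_one, Matrix.conjTranspose_neg, Matrix.conjTranspose_one, Matrix.mul_one,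
      Matrix.mul_neg, neg_neg]
    congr 1 <;> module
  have hNp : N.PosDef := by
    have e : N = (2⁻¹:ℝ) • (K1 * A * K1ᴴ) + (2⁻¹:ℝ) • (K2 * B * K2ᴴ) := by
      rw [← n1, ← n2, Matrix.mul_assoc, Matrix.mul_assoc, ← Matrix.mul_smul N, ← Matrix.mul_smul N,
        ← Matrix.mul_add, kk, Matrix.mul_one]
    have hps : N.PosSemidef := by
      rw [e]
      exact (psd_rsmul (hA.posSemidef.mul_mul_conjTranspose_same K1) (by norm_num)).add
        (psd_rsmul (hB.posSemidef.mul_mul_conjTranspose_same K2) (by norm_num))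
    rw [hps.posDef_iff_isUnit]
    have hi : N * ((2⁻¹:ℝ) • (K1 * A⁻¹ * K1ᴴ) + (2⁻¹:ℝ) • (K2 * B⁻¹ * K2ᴴ)) = 1 := by
      rw [Matrix.mul_add, Matrix.mul_smul, Matrix.mul_smul, ← Matrix.mul_assoc, ← Matrix.mul_assoc,
        ← Matrix.mul_assoc, ← Matrix.mul_assoc, n1, n2, Matrix.mul_assoc K1, Matrix.mul_assoc K2,
        pd_mul_inv hA, pd_mul_inv hB, Matrix.mul_one, Matrix.mul_one, kk]
    exact IsUnit.of_mul_eq_one _ hi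
  have hd : (L - N).PosSemidef := by
    have e : L - N = ε⁻¹ • ((Matrix.fromRows (ε • (1 : Matrix (Fin n) (Fin n) ℂ)) (-D)) *
       (Matrix.fromRows (ε • (1 : Matrix (Fin n) (Fin n) ℂ)) (-D))ᴴ) := by
      rw [sub_eq_iff_eq_add]
      simp only [L, N, Me, C, Matrix.conjTranspose_fromRows_eq_fromCols_conjTranspose,
        Matrix.fromRows_mul_fromCols, Matrix.fromBlocks_smul, Matrix.fromBlocks_add,
        Matrix.conjTranspose_neg, Matrix.conjTranspose_smul, Matrix.conjTranspose_one, hDh]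
      congr 1 <;> simp [smul_smul, hε.ne', add_comm]
    rw [e]
    exact psd_rsmul (Matrix.posSemidef_self_mul_conjTranspose _) (by positivity)
  have hLp : L.PosDef := by
    have := hNp.add_posSemidef hd
    rwa [add_sub_cancel] at this
  have key := opmono_gen h hLp.inv hNp.inv (inv_anti hNp hLp hd)
  have m1 := cfc_inv_inter hA hNp K1 n1 f
  have m2 := cfc_inv_inter hB hNp K2 n2 f
  have m3 := cfc_inv_inter hMep hLp J1 l1 f
  have m4 := cfc_inv_inter hCp hLp J2 l2 f
  let Z := K1 * X + K2 * Y
  have hZ : Z = J1 + J2 * (X - Y) := by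
    simp only [Z, K1, K2, J1, J2, Matrix.fromRows_mul, Matrix.one_mul, Matrix.neg_mul,
      Matrix.zero_mul]
    ext i j
    rcases i with i | i
    · simp [← hXY]
    · simp [sub_eq_add_neg]
  have q1 : Zᴴ * cfc f N⁻¹ * Z = (2:ℝ) • (Xᴴ * cfc f A⁻¹ * X) + (2:ℝ) • (Yᴴ * cfc f B⁻¹ * Y) := by
    rw [Matrix.mul_assoc]
    have : cfc f N⁻¹ * Z = K1 * (cfc f A⁻¹ * X) + K2 * (cfc f B⁻¹ * Y) := by
      simp only [Z, Matrix.mul_add, ← Matrix.mul_assoc, m1, m2]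
    rw [this]
    have z1 : Zᴴ * K1 = (2:ℝ) • Xᴴ := by
      simp [Z, Matrix.conjTranspose_add, Matrix.conjTranspose_mul, Matrix.add_mul,
        Matrix.mul_assoc, k11, k21]
    have z2 : Zᴴ * K2 = (2:ℝ) • Yᴴ := by
      simp [Z, Matrix.conjTranspose_add, Matrix.conjTranspose_mul, Matrix.add_mul,
        Matrix.mul_assoc, k12, k22]
    rw [Matrix.mul_add, ← Matrix.mul_assoc Zᴴ, z1, ← Matrix.mul_assoc Zᴴ, z2]
    simp only [Matrix.smul_mul, Matrix.mul_assoc]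
  have q2 : Zᴴ * cfc f L⁻¹ * Z = cfc f Me⁻¹ + (X - Y)ᴴ * cfc f C⁻¹ * (X - Y) := by
    rw [Matrix.mul_assoc]
    have : cfc f L⁻¹ * Z = J1 * cfc f Me⁻¹ + J2 * (cfc f C⁻¹ * (X - Y)) := by
      simp only [hZ, Matrix.mul_add, ← Matrix.mul_assoc, m3, m4]
    rw [this]
    have z1 : Zᴴ * J1 = 1 := by
      simp [hZ, Matrix.conjTranspose_add, Matrix.conjTranspose_mul, Matrix.add_mul,
        Matrix.mul_assoc, j11, j21]
    have z2 : Zᴴ * J2 = (X - Y)ᴴ := by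
      simp [hZ, Matrix.conjTranspose_add, Matrix.conjTranspose_mul, Matrix.add_mul,
        Matrix.mul_assoc, j12, j22]
    rw [Matrix.mul_add, ← Matrix.mul_assoc Zᴴ, z1, ← Matrix.mul_assoc Zᴴ, z2, Matrix.one_mul]
    simp only [Matrix.mul_assoc]
  have key2 := key.conjTranspose_mul_mul_same Z
  rw [Matrix.mul_sub, Matrix.sub_mul, q1, q2] at key2
  have key3 := key2.add ((cfc_pd hCp.inv f hf').posSemidef.conjTranspose_mul_mul_same (X - Y))
  convert key3 using 1
  simp only [Me]
  abel

lemma cfc_inv_eq {X : Matrix m m ℂ} (hX : X.PosDef) (f : ℝ → ℝ) :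
    cfc f X⁻¹ = cfc (fun x => f x⁻¹) X := by
  have h : X⁻¹ = cfc (fun x : ℝ => x⁻¹) X := by
    refine Matrix.inv_eq_right_inv ?_
    nth_rewrite 1 [← cfc_id ℝ X hX.1.isSelfAdjoint]
    rw [← cfc_mul _ _ X (spec_cont X hX.1 _) (spec_cont X hX.1 _), ← cfc_one ℝ X hX.1.isSelfAdjoint]
    refine cfc_congr fun x hx => ?_
    simp [(pd_spec hX x hx).ne']
  rw [h, ← cfc_comp f (fun x : ℝ => x⁻¹) X hX.1.isSelfAdjoint
    (((spec_finite X hX.1).image _).continuousOn _) (spec_cont X hX.1 _)]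
  rfl

lemma cfc_shift_eq {X : Matrix m m ℂ} (hX : X.IsHermitian) (f : ℝ → ℝ) (ε : ℝ) :
    cfc f (X + ε • (1 : Matrix m m ℂ)) = cfc (fun x => f (x + ε)) X := by
  have h : X + ε • (1 : Matrix m m ℂ) = cfc (fun x : ℝ => x + ε) X := by
    rw [cfc_add_const ε (fun x => x) X (spec_cont X hX _) hX.isSelfAdjoint, cfc_id' ℝ X hX.isSelfAdjoint,
      Algebra.algebraMap_eq_smul_one]
  rw [h, ← cfc_comp f (fun x : ℝ => x + ε) X hX.isSelfAdjoint
    (((spec_finite X hX).image _).continuousOn _) (spec_cont X hX _)]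
  rfl

lemma cfc_tendsto {X : Matrix m m ℂ} (hX : X.IsHermitian) {ι : Type*} {l : Filter ι}
    (F : ι → ℝ → ℝ) (f : ℝ → ℝ) (h : ∀ x ∈ spectrum ℝ X, Tendsto (fun i => F i x) l (𝓝 (f x))) :
    Tendsto (fun i => cfc (F i) X) l (𝓝 (cfc f X)) := by
  simp only [hX.cfc_eq, Matrix.IsHermitian.cfc, Unitary.conjStarAlgAut_apply]
  refine Tendsto.mul (Tendsto.mul tendsto_const_nhds ?_) tendsto_const_nhds
  refine (Continuous.tendsto (f := fun d : m → ℂ => Matrix.diagonal d) (by fun_prop) _).comp ?_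
  rw [tendsto_pi_nhds]
  intro i
  exact (Complex.continuous_ofReal.tendsto _).comp (h _ (hX.eigenvalues_mem_spectrum_real i))

lemma psd_limit {ι : Type*} {l : Filter ι} [l.NeBot] {F : ι → Matrix m m ℂ} {G : Matrix m m ℂ}
    (h : Tendsto F l (𝓝 G)) (hF : ∀ᶠ i in l, (F i).PosSemidef) : G.PosSemidef := by
  rw [Matrix.posSemidef_iff_dotProduct_mulVec]
  constructor
  · have h1 : Tendsto (fun i => (F i)ᴴ) l (𝓝 Gᴴ) :=
      (Continuous.tendsto (f := fun A : Matrix m m ℂ => Aᴴ) (by fun_prop) _).comp h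
    refine tendsto_nhds_unique h1 (h.congr' ?_)
    filter_upwards [hF] with i hi
    exact hi.1.eq.symm
  · intro x
    have h1 : Tendsto (fun i => star x ⬝ᵥ (F i *ᵥ x)) l (𝓝 (star x ⬝ᵥ (G *ᵥ x))) :=
      (Continuous.tendsto (f := fun A : Matrix m m ℂ => star x ⬝ᵥ (A *ᵥ x)) (by fun_prop) _).comp h
    refine ge_of_tendsto h1 ?_
    filter_upwards [hF] with i hi
    exact hi.dotProduct_mulVec_nonneg x

lemma wharm_eq {n : ℕ} {A B : Matrix (Fin n) (Fin n) ℂ} :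
    wharm 2⁻¹ A B = ((2⁻¹:ℝ) • (A⁻¹ + B⁻¹))⁻¹ := by
  unfold wharm
  congr 1
  module

lemma fwd {n : ℕ} {f : ℝ → ℝ} (hf : ContinuousOn f (Set.Ioi 0))
    (hf' : ∀ x, 0 < x → 0 < f x) (h : OperatorMonotone f)
    {A B : Matrix (Fin n) (Fin n) ℂ} (hA : A.PosDef) (hB : B.PosDef) :
    MLE (cfc f (wharm 2⁻¹ A B)) (wgeom 2⁻¹ (cfc f A) (cfc f B)) := by
  refine geom_lower (cfc_pd hA f hf') (cfc_pd hB f hf') fun X Y hXY => ?_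
  rw [wharm_eq]
  have hM : ((2⁻¹:ℝ) • (A⁻¹ + B⁻¹)).PosDef := pd_rsmul (hA.inv.add hB.inv) (by norm_num)
  have key := fun {ε : ℝ} (hε : 0 < ε) => fwd_eps hf' h hA.inv hB.inv hε X Y hXY
  rw [pd_inv_inv hA, pd_inv_inv hB] at key
  set M := (2⁻¹:ℝ) • (A⁻¹ + B⁻¹)
  have hl : Tendsto (fun ε : ℝ => cfc f (M + ε • (1 : Matrix (Fin n) (Fin n) ℂ))⁻¹) (𝓝[>] 0)
      (𝓝 (cfc f M⁻¹)) := by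
    rw [cfc_inv_eq hM]
    have h1 := cfc_tendsto hM.1 (l := 𝓝[>] (0:ℝ)) (fun ε x => f (x + ε)⁻¹) (fun x => f x⁻¹) (by
      intro x hx
      have hx := pd_spec hM x hx
      have hc : ContinuousAt f x⁻¹ := hf.continuousAt (Ioi_mem_nhds (inv_pos.2 hx))
      have h0 : Tendsto (fun ε : ℝ => (x + ε)⁻¹) (𝓝 0) (𝓝 x⁻¹) := by
        have : ContinuousAt (fun ε : ℝ => (x + ε)⁻¹) 0 :=
          ContinuousAt.inv₀ (by fun_prop) (by simpa using hx.ne')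
        simpa [ContinuousAt] using this
      exact hc.tendsto.comp (h0.mono_left nhdsWithin_le_nhds))
    refine h1.congr' ?_
    filter_upwards [self_mem_nhdsWithin] with ε hε
    rw [cfc_inv_eq (hM.add (pd_rsmul Matrix.PosDef.one hε)), cfc_shift_eq hM.1]
  refine psd_limit (l := 𝓝[>] (0:ℝ)) (tendsto_const_nhds.sub hl) ?_
  filter_upwards [self_mem_nhdsWithin] with ε hε
  exact key hε

lemma cfc_eigvec {A : Matrix m m ℂ} (hA : A.IsHermitian) (v : m → ℂ) (μ : ℝ)
    (h : A *ᵥ v = μ • v) (g : ℝ → ℝ) : cfc g A *ᵥ v = g μ • v := by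
  obtain ⟨p, hp⟩ := interp (spectrum ℝ A ∪ {μ}) ((spec_finite A hA).union (Set.finite_singleton μ)) g
  rw [cfc_aeval_eq hA g p fun x hx => hp x (Or.inl hx), ← hp μ (Or.inr rfl)]
  clear hp
  induction p using Polynomial.induction_on' with
  | add p q hp hq => simp [Matrix.add_mulVec, add_smul, hp, hq]
  | monomial n a =>
    have : A ^ n *ᵥ v = (μ ^ n) • v := by
      induction n with
      | zero => simp
      | succ n ih => rw [pow_succ, ← Matrix.mulVec_mulVec, h, Matrix.mulVec_smul, ih, smul_smul,
          pow_succ']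
    simp only [Polynomial.aeval_monomial, Algebra.algebraMap_eq_smul_one, smul_mul_assoc, one_mul]
    rw [Matrix.smul_mulVec, this, smul_smul, Polynomial.eval_monomial]

def HAM (g : ℝ → ℝ) : Prop := ∀ (n : ℕ) (A B : Matrix (Fin n) (Fin n) ℂ), A.PosDef → B.PosDef →
  ∀ t : ℝ, 0 < t →
    ((t / 2) • cfc g A + (t⁻¹ / 2) • cfc g B - cfc g ((2⁻¹ : ℝ) • (A + B))).PosSemidef

lemma ham_two {g : ℝ → ℝ} (H : HAM g) (hg : ∀ x, 0 < x → 0 < g x) {l T c s t : ℝ} (hl : 0 < l)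
    (hT : 0 < T) (hcs : c ^ 2 + s ^ 2 = 1) (ht : 0 < t) :
    s ^ 2 * g (l + c ^ 2 * T) ≤ t / 2 * (g l + g (l + T)) + t⁻¹ / 2 * g l := by
  let A : Matrix (Fin 2) (Fin 2) ℂ := l • 1 + T • Matrix.vecMulVec ![(c:ℂ), (s:ℂ)] (star ![(c:ℂ), (s:ℂ)])
  let B : Matrix (Fin 2) (Fin 2) ℂ := l • 1 + T • Matrix.vecMulVec ![(c:ℂ), -(s:ℂ)] (star ![(c:ℂ), -(s:ℂ)])
  have hA : A.PosDef := (pd_rsmul Matrix.PosDef.one hl).add_posSemidef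
    (psd_rsmul (Matrix.posSemidef_vecMulVec_self_star _) hT.le)
  have hB : B.PosDef := (pd_rsmul Matrix.PosDef.one hl).add_posSemidef
    (psd_rsmul (Matrix.posSemidef_vecMulVec_self_star _) hT.le)
  have hcsC : (c:ℂ) ^ 2 + (s:ℂ) ^ 2 = 1 := by exact_mod_cast hcs
  have key := H 2 A B hA hB t ht
  have hM : ((2⁻¹ : ℝ) • (A + B)).IsHermitian := (pd_rsmul (hA.add hB) (by norm_num)).1
  have a1 := cfc_eigvec hA.1 ![(c:ℂ), (s:ℂ)] (l + T) (by
    ext i; fin_cases i <;> simp [A, Matrix.vecMulVec, Matrix.mulVec, dotProduct, Fin.sum_univ_two]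
    · linear_combination (T * c : ℂ) * hcsC
    · linear_combination (T * s : ℂ) * hcsC) g
  have a2 := cfc_eigvec hA.1 ![-(s:ℂ), (c:ℂ)] l (by
    ext i; fin_cases i <;> simp [A, Matrix.vecMulVec, Matrix.mulVec, dotProduct, Fin.sum_univ_two]
      <;> ring) g
  have b1 := cfc_eigvec hB.1 ![(s:ℂ), (c:ℂ)] l (by
    ext i; fin_cases i <;> simp [B, Matrix.vecMulVec, Matrix.mulVec, dotProduct, Fin.sum_univ_two]
      <;> ring) g
  have m1 := cfc_eigvec hM ![(1:ℂ), 0] (l + c ^ 2 * T) (by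
    ext i; fin_cases i <;> simp [A, B, Matrix.vecMulVec, Matrix.mulVec, dotProduct, Fin.sum_univ_two]
      <;> ring) g
  have m2 := cfc_eigvec hM ![(0:ℂ), 1] (l + s ^ 2 * T) (by
    ext i; fin_cases i <;> simp [A, B, Matrix.vecMulVec, Matrix.mulVec, dotProduct, Fin.sum_univ_two]
      <;> ring) g
  have a3 : cfc g A *ᵥ ![(s:ℂ), (c:ℂ)] = (2 * c * s * g (l + T)) • ![(c:ℂ), (s:ℂ)]
      + ((c ^ 2 - s ^ 2) * g l) • ![-(s:ℂ), (c:ℂ)] := by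
    have e : ![(s:ℂ), (c:ℂ)] = (2 * c * s) • ![(c:ℂ), (s:ℂ)] + (c ^ 2 - s ^ 2) • ![-(s:ℂ), (c:ℂ)] := by
      ext i; fin_cases i <;> simp
      · linear_combination (-s : ℂ) * hcsC
      · linear_combination (-c : ℂ) * hcsC
    rw [e, Matrix.mulVec_add, Matrix.mulVec_smul, Matrix.mulVec_smul, a1, a2, smul_smul, smul_smul]
  have m3 : cfc g ((2⁻¹ : ℝ) • (A + B)) *ᵥ ![(s:ℂ), (c:ℂ)] = (s * g (l + c ^ 2 * T)) • ![(1:ℂ), 0]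
      + (c * g (l + s ^ 2 * T)) • ![(0:ℂ), 1] := by
    have e : ![(s:ℂ), (c:ℂ)] = s • ![(1:ℂ), 0] + c • ![(0:ℂ), 1] := by
      ext i; fin_cases i <;> simp
    rw [e, Matrix.mulVec_add, Matrix.mulVec_smul, Matrix.mulVec_smul, m1, m2, smul_smul, smul_smul]
  have k := key.dotProduct_mulVec_nonneg ![(s:ℂ), (c:ℂ)]
  rw [Matrix.sub_mulVec, Matrix.add_mulVec, Matrix.smul_mulVec, Matrix.smul_mulVec, a3, b1, m3] at k
  replace k := (Complex.le_def.1 k).1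
  simp [dotProduct, Fin.sum_univ_two] at k
  have r1 : ((c:ℂ) ^ 2).re = c ^ 2 := by rw [← Complex.ofReal_pow, Complex.ofReal_re]
  have r2 : ((s:ℂ) ^ 2).re = s ^ 2 := by rw [← Complex.ofReal_pow, Complex.ofReal_re]
  simp only [r1, r2] at k
  have p1 := hg l hl
  have p2 := hg (l + T) (by positivity)
  have p3 := hg (l + s ^ 2 * T) (by positivity)
  have q1 : (2 * c * s) ^ 2 + (c ^ 2 - s ^ 2) ^ 2 = 1 := by
    linear_combination (c ^ 2 + s ^ 2 + 1) * hcs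
  have q2 : (2 * c * s) ^ 2 * g (l + T) ≤ g (l + T) := by
    nlinarith [sq_nonneg (c ^ 2 - s ^ 2)]
  have q3 : (c ^ 2 - s ^ 2) ^ 2 * g l ≤ g l := by
    nlinarith [sq_nonneg (2 * c * s)]
  have q4 : 0 ≤ c ^ 2 * g (l + s ^ 2 * T) := by positivity
  have q5 : t / 2 * ((2 * c * s) ^ 2 * g (l + T) + (c ^ 2 - s ^ 2) ^ 2 * g l) ≤
     t / 2 * (g l + g (l + T)) := by
    apply mul_le_mul_of_nonneg_left _ (by positivity); linarith
  have q6 : t⁻¹ / 2 * g l = t⁻¹ / 2 * g l * (c ^ 2 + s ^ 2) := by rw [hcs, mul_one]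
  ring_nf at k q5 q4 q6 ⊢
  linarith

lemma ham_opt {g : ℝ → ℝ} (H : HAM g) (hg : ∀ x, 0 < x → 0 < g x) {l x y : ℝ} (hl : 0 < l)
    (hx : 0 < x) (hxy : x < y) :
    ((y - x) / y * g (l + x)) ^ 2 ≤ g l * (g l + g (l + y)) := by
  have hy : 0 < y := hx.trans hxy
  have hc : (√(x / y)) ^ 2 = x / y := Real.sq_sqrt (by positivity)
  have hs : (√((y - x) / y)) ^ 2 = (y - x) / y :=
    Real.sq_sqrt (div_nonneg (by linarith) hy.le)
  have p0 := hg l hl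
  have p1 := hg (l + x) (by positivity)
  have p2 := hg (l + y) (by positivity)
  set w := (y - x) / y * g (l + x) with hw
  have hw0 : 0 < w := mul_pos (div_pos (by linarith) hy) p1
  have h := ham_two H hg (c := √(x / y)) (s := √((y - x) / y)) (t := w / (g l + g (l + y))) hl hy
    (by rw [hc, hs]; field_simp; ring) (by positivity)
  rw [hc, hs, div_mul_cancel₀ _ hy.ne', ← hw] at h
  have hS : 0 < g l + g (l + y) := by positivity
  have e : w / (g l + g (l + y)) / 2 * (g l + g (l + y)) + (w / (g l + g (l + y)))⁻¹ / 2 * g l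
      = w / 2 + (g l * (g l + g (l + y))) / (2 * w) := by field_simp
  rw [e] at h
  have h2 : w / 2 ≤ (g l * (g l + g (l + y))) / (2 * w) := by linarith
  rw [le_div_iff₀ (by positivity)] at h2
  nlinarith

lemma ham_bdd {g : ℝ → ℝ} (H : HAM g) (hg : ∀ x, 0 < x → 0 < g x)
    (hc : ContinuousOn g (Set.Ioi 0)) {l x : ℝ} (hl : 0 < l) (hx : 0 < x) :
    g (l + x) ≤ 73 * g l := by
  by_contra! hcon
  have p0 := hg l hl
  have claim : ∀ k : ℕ, 73 * 8 ^ k * g l ≤ g (l + x * (3 - 2 * (1 / 2) ^ k)) := by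
    intro k
    induction k with
    | zero => norm_num; exact hcon.le
    | succ k ih =>
      have hd : (0:ℝ) < (1 / 2) ^ k := by positivity
      have hd1 : ((1:ℝ) / 2) ^ k ≤ 1 := pow_le_one₀ (by norm_num) (by norm_num)
      have e8 : ((1:ℝ) / 2) ^ k * 8 ^ k = 4 ^ k := by rw [← mul_pow]; norm_num
      have e16 : ((4:ℝ) ^ k) ^ 2 = 2 ^ k * 8 ^ k := by
        rw [← pow_mul, mul_comm, pow_mul, ← mul_pow]; norm_num
      have h28 : (1:ℝ) ≤ 2 ^ k := one_le_pow₀ (by norm_num)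
      have h8 : (1:ℝ) ≤ 8 ^ k := one_le_pow₀ (by norm_num)
      rw [pow_succ, pow_succ]
      set d : ℝ := (1 / 2) ^ k with hdd
      have hx1 : 0 < x * (3 - 2 * d) := mul_pos hx (by linarith)
      have hlt : x * (3 - 2 * d) < x * (3 - 2 * (d * (1 / 2))) := by nlinarith
      have hy1 := hx1.trans hlt
      have h := ham_opt H hg hl hx1 hlt
      set gy := g (l + x * (3 - 2 * (d * (1 / 2))))
      have hr : d / 3 ≤ (x * (3 - 2 * (d * (1 / 2))) - x * (3 - 2 * d)) / (x * (3 - 2 * (d * (1 / 2)))) := by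
        rw [div_le_div_iff₀ (by norm_num) hy1]
        nlinarith [mul_pos hx hd, mul_pos (mul_pos hx hd) hd]
      have h1 : d / 3 * (73 * 8 ^ k * g l) ≤ (x * (3 - 2 * (d * (1 / 2))) - x * (3 - 2 * d)) /
          (x * (3 - 2 * (d * (1 / 2)))) * g (l + x * (3 - 2 * d)) :=
        mul_le_mul hr ih (by positivity) (le_trans (by positivity) hr)
      have h2 := (pow_le_pow_left₀ (by positivity) h1 2).trans h
      have h3 : d / 3 * (73 * 8 ^ k * g l) = 73 / 3 * 4 ^ k * g l := by rw [← e8]; ring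
      rw [h3, mul_pow, mul_pow, e16] at h2
      have h4 : (73 / 3) ^ 2 * (2 ^ k * 8 ^ k) * g l ≤ g l + gy := by
        refine le_of_mul_le_mul_left ?_ p0
        linarith
      have h5 : 592 * 8 ^ k * g l ≤ (73 / 3) ^ 2 * (2 ^ k * 8 ^ k) * g l := by
        apply mul_le_mul_of_nonneg_right _ p0.le
        have : (8:ℝ) ^ k ≤ 2 ^ k * 8 ^ k := by nlinarith
        nlinarith
      have h6 : g l ≤ 8 ^ k * g l := by nlinarith
      nlinarith
  have hcpt : IsCompact (Set.Icc l (l + 3 * x)) := isCompact_Icc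
  obtain ⟨C, hC⟩ := hcpt.exists_bound_of_continuousOn
    (hc.mono fun z hz => lt_of_lt_of_le hl hz.1)
  obtain ⟨k, hk⟩ := pow_unbounded_of_one_lt (C / (73 * g l)) (show (1:ℝ) < 8 by norm_num)
  have hd : (0:ℝ) < (1 / 2) ^ k := by positivity
  have hd1 : ((1:ℝ) / 2) ^ k ≤ 1 := pow_le_one₀ (by norm_num) (by norm_num)
  have h1 := hC (l + x * (3 - 2 * (1 / 2) ^ k)) ⟨by nlinarith, by nlinarith⟩
  rw [Real.norm_eq_abs] at h1
  have h2 := (claim k).trans ((le_abs_self _).trans h1)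
  rw [div_lt_iff₀ (by positivity)] at hk
  linarith

lemma ham_dyadic {g : ℝ → ℝ} (H : HAM g) {n : ℕ} {A X : Matrix (Fin n) (Fin n) ℂ} (hA : A.PosDef)
    (hX : X.PosDef) (k : ℕ) :
    ((1 - (1 / 2 : ℝ) ^ k) • cfc g A + ((1 / 2 : ℝ) ^ k) • cfc g X -
      cfc g ((1 - (1 / 2 : ℝ) ^ k) • A + ((1 / 2 : ℝ) ^ k) • X)).PosSemidef := by
  induction k with
  | zero => simpa using Matrix.PosSemidef.zero
  | succ k ih =>
    have hd : (0:ℝ) < (1 / 2) ^ k := by positivity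
    have hd1 : ((1:ℝ) / 2) ^ k ≤ 1 := pow_le_one₀ (by norm_num) (by norm_num)
    rw [pow_succ]
    set d : ℝ := (1 / 2) ^ k with hdd
    have hY : ((1 - d) • A + d • X).PosDef :=
      Matrix.PosDef.posSemidef_add (psd_rsmul hA.posSemidef (by linarith)) (pd_rsmul hX hd)
    have h1 := H n A _ hA hY 1 one_pos
    have h2 := h1.add (psd_rsmul ih (show (0:ℝ) ≤ 1 / 2 by norm_num))
    have e : (2⁻¹:ℝ) • (A + ((1 - d) • A + d • X)) = (1 - d * (1 / 2)) • A + (d * (1 / 2)) • X := by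
      module
    rw [e] at h2
    convert h2 using 1
    rw [inv_one]
    module

lemma ham_anti {g : ℝ → ℝ} (H : HAM g) (hg : ∀ x, 0 < x → 0 < g x)
    (hc : ContinuousOn g (Set.Ioi 0)) {n : ℕ} {A B : Matrix (Fin n) (Fin n) ℂ} (hA : A.PosDef)
    (hAB : (B - A).PosSemidef) : (cfc g A - cfc g B).PosSemidef := by
  rcases isEmpty_or_nonempty (Fin n) with hn | hn
  · rw [Subsingleton.elim (cfc g A - cfc g B) 0]
    exact Matrix.PosSemidef.zero
  obtain ⟨l, hl, hlA⟩ := (CFC.exists_pos_algebraMap_le_iff hA.1.isSelfAdjoint).2 (pd_spec hA)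
  have hX : ∀ k : ℕ, (A + (2:ℝ) ^ k • (B - A)).PosDef := fun k =>
    hA.add_posSemidef (psd_rsmul hAB (by positivity))
  have hK : ∀ k : ℕ, ((73 * g l) • 1 - cfc g (A + (2:ℝ) ^ k • (B - A))).PosSemidef := by
    intro k
    have h1 : algebraMap ℝ _ l ≤ A + (2:ℝ) ^ k • (B - A) := by
      refine hlA.trans ?_
      rw [Matrix.le_iff, add_sub_cancel_left]
      exact psd_rsmul hAB (by positivity)
    rw [algebraMap_le_iff_le_spectrum (hX k).1.isSelfAdjoint] at h1
    have h2 : cfc g (A + (2:ℝ) ^ k • (B - A)) ≤ algebraMap ℝ _ (73 * g l) := by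
      refine cfc_le_algebraMap g (73 * g l) _ (fun x hx => ?_) (spec_cont _ (hX k).1 g)
        (hX k).1.isSelfAdjoint
      rcases (h1 x hx).eq_or_lt with h | h
      · rw [← h]; linarith [hg l hl]
      · have := ham_bdd H hg hc hl (sub_pos.2 h)
        rwa [add_sub_cancel] at this
    rw [Matrix.le_iff, Algebra.algebraMap_eq_smul_one] at h2
    exact h2
  have key : ∀ k : ℕ, ((1 - (1 / 2 : ℝ) ^ k) • cfc g A +
      ((1 / 2 : ℝ) ^ k) • ((73 * g l) • (1 : Matrix (Fin n) (Fin n) ℂ)) - cfc g B).PosSemidef := by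
    intro k
    have h1 := ham_dyadic H hA (hX k) k
    have e : (1 - (1 / 2 : ℝ) ^ k) • A + ((1 / 2 : ℝ) ^ k) • (A + (2:ℝ) ^ k • (B - A)) = B := by
      rw [smul_add, smul_smul, ← mul_pow]
      norm_num
      module
    rw [e] at h1
    have h2 := h1.add (psd_rsmul (hK k) (show (0:ℝ) ≤ (1 / 2) ^ k by positivity))
    convert h2 using 1
    module
  have hl0 : Tendsto (fun k : ℕ => (1 / 2 : ℝ) ^ k) atTop (𝓝 0) :=
    tendsto_pow_atTop_nhds_zero_of_lt_one (by norm_num) (by norm_num)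
  have hlim := (((tendsto_const_nhds (x := (1:ℝ))).sub hl0).smul_const (cfc g A)).add
    (hl0.smul_const ((73 * g l) • (1 : Matrix (Fin n) (Fin n) ℂ)))
  have hlim2 := hlim.sub (tendsto_const_nhds (x := cfc g B))
  rw [sub_zero, one_smul, zero_smul, add_zero] at hlim2
  exact psd_limit hlim2 (Eventually.of_forall key)

end Aux

theorem stmt_4 (f : ℝ → ℝ) (hf : ContinuousOn f (Set.Ioi 0))
    (hf' : ∀ x ∈ Set.Ioi (0:ℝ), f x ∈ Set.Ioi (0:ℝ)) :
    OperatorMonotone f ↔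
      ∀ (n : ℕ) (A B : Matrix (Fin n) (Fin n) ℂ), A.PosDef → B.PosDef →
        MLE (cfc f (wharm 2⁻¹ A B)) (wgeom 2⁻¹ (cfc f A) (cfc f B)) := by
  have hf2 : ∀ x, 0 < x → 0 < f x := fun x hx => hf' x hx
  constructor
  · intro h n A B hA hB
    exact fwd hf hf2 h hA hB
  · intro h
    have hg : ∀ x : ℝ, 0 < x → 0 < f x⁻¹ := fun x hx => hf2 _ (inv_pos.2 hx)
    have hc : ContinuousOn (fun x => f x⁻¹) (Set.Ioi 0) :=
      hf.comp (continuousOn_inv₀.mono fun x hx => ne_of_gt hx) fun x hx =>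
        Set.mem_Ioi.2 (inv_pos.2 (Set.mem_Ioi.1 hx))
    have H : HAM (fun x => f x⁻¹) := by
      intro n A B hA hB t ht
      have h1 := h n A⁻¹ B⁻¹ hA.inv hB.inv
      unfold MLE at h1
      rw [wharm_eq, pd_inv_inv hA, pd_inv_inv hB] at h1
      have h2 := h1.add (geom_am (cfc_pd hA.inv f hf2) (cfc_pd hB.inv f hf2) ht)
      rw [cfc_inv_eq hA, cfc_inv_eq hB, cfc_inv_eq (pd_rsmul (hA.add hB) (by norm_num))] at h2
      convert h2 using 1
      abel
    intro n A B hA hB hAB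
    have h1 := ham_anti H hg hc hB.inv (inv_anti hA hB hAB)
    rw [← cfc_inv_eq hA.inv, ← cfc_inv_eq hB.inv, pd_inv_inv hA, pd_inv_inv hB] at h1
    exact h1
end

section
/- A continuous function f : (0,∞) → (0,∞) is operator monotone if and only if f(A ! B) ≤ f(A) ! f(B) for every n ∈ ℕ and all n×n positive definite complex matrices A, B. -/
open Matrix
open scoped ComplexOrder

open Filter Topology

lemma contFin {ι : Type*} [Fintype ι] [DecidableEq ι] (f : ℝ → ℝ) (A : Matrix ι ι ℂ) :
    ContinuousOn f (spectrum ℝ A) := A.finite_real_spectrum.continuousOn f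

lemma specPos {ι : Type*} [Fintype ι] [DecidableEq ι] {A : Matrix ι ι ℂ} (hA : A.PosDef) :
    ∀ x ∈ spectrum ℝ A, 0 < x := by
  intro x hx
  rw [hA.isHermitian.spectrum_real_eq_range_eigenvalues] at hx
  obtain ⟨i, rfl⟩ := hx
  exact hA.eigenvalues_pos i

lemma cfcPosDef {ι : Type*} [Fintype ι] [DecidableEq ι] {A : Matrix ι ι ℂ} (hA : A.PosDef)
    (f : ℝ → ℝ) (hf : ∀ x, 0 < x → 0 < f x) : (cfc f A).PosDef := by
  have hH : (cfc f A).IsHermitian := cfc_predicate (p := IsSelfAdjoint) f A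
  rw [hH.posDef_iff_eigenvalues_pos]
  intro i
  have h := hH.eigenvalues_mem_spectrum_real i
  rw [cfc_map_spectrum (p := IsSelfAdjoint) f A hA.isHermitian (contFin f A)] at h
  obtain ⟨x, hx, h⟩ := h
  rw [← h]
  exact hf x (specPos hA x hx)

lemma cfcInvInv {ι : Type*} [Fintype ι] [DecidableEq ι] {A : Matrix ι ι ℂ} (hA : A.PosDef)
    (f : ℝ → ℝ) (hf : ∀ x, 0 < x → 0 < f x) :
    cfc (fun x => (f x⁻¹)⁻¹) A = (cfc f A⁻¹)⁻¹ := by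
  have hs : IsSelfAdjoint A := hA.isHermitian
  rw [cfc_inv (fun x => f x⁻¹) A (fun x hx => (hf _ (inv_pos.2 (specPos hA x hx))).ne')
    (contFin _ _) hs, ← Matrix.nonsing_inv_eq_ringInverse]
  congr 1
  rw [cfc_comp' f (fun x => x⁻¹) A ((A.finite_real_spectrum.image _).continuousOn f)
    (contFin _ _) hs, cfc_ringInverse_id A hA.isUnit hs, ← Matrix.nonsing_inv_eq_ringInverse]

lemma invAnti {ι : Type*} [Fintype ι] [DecidableEq ι] {A B : Matrix ι ι ℂ} (hA : A.PosDef)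
    (hB : B.PosDef) (h : (B - A).PosSemidef) : (A⁻¹ - B⁻¹).PosSemidef := by
  have := hB.isUnit.invertible
  have := hA.inv.isUnit.invertible
  have h1 := PosDef.fromBlocks₁₁ (1 : Matrix ι ι ℂ) A⁻¹ hB
  have h2 := PosDef.fromBlocks₂₂ B (1 : Matrix ι ι ℂ) hA.inv
  have h3 : A⁻¹⁻¹ = A := Matrix.nonsing_inv_nonsing_inv _ ((Matrix.isUnit_iff_isUnit_det _).1 hA.isUnit)
  rw [h2] at h1
  simpa [h3, h] using h1

lemma invinv {ι : Type*} [Fintype ι] [DecidableEq ι] {A : Matrix ι ι ℂ} (hA : A.PosDef) :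
    A⁻¹⁻¹ = A :=
  Matrix.nonsing_inv_nonsing_inv _ ((Matrix.isUnit_iff_isUnit_det _).1 hA.isUnit)

lemma psdLim {ι : Type*} [Fintype ι] [DecidableEq ι] {F : ℕ → Matrix ι ι ℂ} {L : Matrix ι ι ℂ}
    (hF : ∀ k, (F k).PosSemidef) (h : Tendsto F atTop (𝓝 L)) : L.PosSemidef := by
  refine PosSemidef.of_dotProduct_mulVec_nonneg ?_ fun x => ?_
  · have h1 : Tendsto (fun k => (F k)ᴴ) atTop (𝓝 Lᴴ) :=
      (Continuous.matrix_conjTranspose continuous_id).continuousAt.tendsto.comp h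
    refine tendsto_nhds_unique h1 (h.congr fun k => ((hF k).isHermitian).symm)
  · have hc : Continuous fun M : Matrix ι ι ℂ => star x ⬝ᵥ (M *ᵥ x) := by fun_prop
    exact ge_of_tendsto' (hc.continuousAt.tendsto.comp h) fun k => (hF k).dotProduct_mulVec_nonneg x

lemma smulPsd {ι : Type*} [Fintype ι] [DecidableEq ι] {A : Matrix ι ι ℂ} (hA : A.PosSemidef)
    {t : ℝ} (ht : 0 ≤ t) : (t • A).PosSemidef := hA.smul ht

lemma smulPd {ι : Type*} [Fintype ι] [DecidableEq ι] {A : Matrix ι ι ℂ} (hA : A.PosDef)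
    {t : ℝ} (ht : 0 < t) : (t • A).PosDef := hA.smul ht

def MidConcave (g : ℝ → ℝ) : Prop :=
  ∀ (n : ℕ) (X Y : Matrix (Fin n) (Fin n) ℂ), X.PosDef → Y.PosDef →
    (cfc g ((2⁻¹:ℝ) • X + (2⁻¹:ℝ) • Y) - ((2⁻¹:ℝ) • cfc g X + (2⁻¹:ℝ) • cfc g Y)).PosSemidef

lemma concaveDyadic {g : ℝ → ℝ} (hg : MidConcave g) (k : ℕ) :
    ∀ (n : ℕ) (X Y : Matrix (Fin n) (Fin n) ℂ), X.PosDef → Y.PosDef →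
    (cfc g ((1 - (2⁻¹:ℝ)^k) • X + ((2⁻¹:ℝ)^k) • Y) -
      ((1 - (2⁻¹:ℝ)^k) • cfc g X + ((2⁻¹:ℝ)^k) • cfc g Y)).PosSemidef := by
  intro n X Y hX hY
  induction k with
  | zero => simpa using PosSemidef.zero
  | succ k ih =>
    have hk : (0:ℝ) < 2⁻¹ ^ k := by positivity
    have hk1 : (2⁻¹:ℝ) ^ k ≤ 1 := pow_le_one₀ (by norm_num) (by norm_num)
    have hW : ((1 - (2⁻¹:ℝ)^k) • X + ((2⁻¹:ℝ)^k) • Y).PosDef :=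
      PosDef.posSemidef_add (smulPsd hX.posSemidef (by linarith)) (smulPd hY hk)
    have h1 := (hg n X _ hX hW).add (smulPsd ih (t := 2⁻¹) (by norm_num))
    convert h1 using 1
    have e : (1 - (2⁻¹:ℝ)^(k+1)) • X + ((2⁻¹:ℝ)^(k+1)) • Y =
      (2⁻¹:ℝ) • X + (2⁻¹:ℝ) • ((1 - (2⁻¹:ℝ)^k) • X + ((2⁻¹:ℝ)^k) • Y) := by
      rw [pow_succ]; module
    rw [e, pow_succ]; module

lemma monoOfConcave {g : ℝ → ℝ} (hg0 : ∀ x, 0 < x → 0 < g x) (hg : MidConcave g) :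
    OperatorMonotone g := by
  intro n A B hA hB hAB
  have hd : ∀ k : ℕ, (cfc g B - (1 - (2⁻¹:ℝ)^k) • cfc g A).PosSemidef := by
    intro k
    have hk : (0:ℝ) < 2⁻¹ ^ k := by positivity
    have hk2 : (0:ℝ) < 2 ^ k := by positivity
    have hY : ((2:ℝ)^k • (B - A) + A).PosDef :=
      PosDef.posSemidef_add (smulPsd hAB hk2.le) hA
    have h1 := concaveDyadic hg k n A _ hA hY
    have e : (1 - (2⁻¹:ℝ)^k) • A + ((2⁻¹:ℝ)^k) • ((2:ℝ)^k • (B - A) + A) = B := by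
      rw [smul_add, smul_smul, ← mul_pow]; norm_num; module
    rw [e] at h1
    convert h1.add (smulPsd (cfcPosDef hY g hg0).posSemidef hk.le) using 1
    module
  refine psdLim hd ?_
  have h1 : Tendsto (fun k : ℕ => (1 - (2⁻¹:ℝ)^k)) atTop (𝓝 (1 - 0)) :=
    (tendsto_pow_atTop_nhds_zero_of_lt_one (by norm_num) (by norm_num)).const_sub 1
  have h2 := (h1.smul_const (cfc g A)).const_sub (cfc g B)
  simpa using h2

lemma blockPosDef {ι : Type*} [Fintype ι] [DecidableEq ι] {A B : Matrix ι ι ℂ} (hA : A.PosDef)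
    (hB : B.PosDef) : (fromBlocks A 0 0 B).PosDef := by
  have := hA.isUnit.invertible
  have h : (fromBlocks A 0 0 B).PosSemidef := by
    have := PosDef.fromBlocks₁₁ (0 : Matrix ι ι ℂ) B hA
    simp only [conjTranspose_zero] at this
    rw [this]; simpa using hB.posSemidef
  rw [h.posDef_iff_isUnit]
  simp [hA.isUnit, hB.isUnit]

lemma exPoly (f : ℝ → ℝ) {S : Set ℝ} (hS : S.Finite) : ∃ p : Polynomial ℝ, ∀ x ∈ S, p.eval x = f x := by
  classical
  refine ⟨Lagrange.interpolate hS.toFinset id f, fun x hx => ?_⟩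
  exact Lagrange.eval_interpolate_at_node f (Function.injective_id.injOn) (hS.mem_toFinset.2 hx)

lemma cfcPoly {ι : Type*} [Fintype ι] [DecidableEq ι] {A : Matrix ι ι ℂ} (hA : A.IsHermitian)
    {f : ℝ → ℝ} {p : Polynomial ℝ} (h : ∀ x ∈ spectrum ℝ A, p.eval x = f x) :
    cfc f A = Polynomial.aeval A p := by
  rw [← cfc_polynomial p A hA]
  exact cfc_congr fun x hx => (h x hx).symm

lemma cfcBlock {ι : Type*} [Fintype ι] [DecidableEq ι] {A B : Matrix ι ι ℂ} (hA : A.IsHermitian)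
    (hB : B.IsHermitian) (f : ℝ → ℝ) :
    cfc f (fromBlocks A 0 0 B) = fromBlocks (cfc f A) 0 0 (cfc f B) := by
  obtain ⟨p, hp⟩ := exPoly f ((A.finite_real_spectrum.union B.finite_real_spectrum).union
    (fromBlocks A 0 0 B).finite_real_spectrum)
  rw [cfcPoly hA (fun x hx => hp x (Or.inl (Or.inl hx))),
    cfcPoly hB (fun x hx => hp x (Or.inl (Or.inr hx))),
    cfcPoly (hA.fromBlocks (by simp) hB) (fun x hx => hp x (Or.inr hx))]
  clear hp
  induction p using Polynomial.induction_on' with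
  | add p q hp hq => rw [map_add, map_add, map_add, hp, hq, fromBlocks_add]; simp
  | monomial n r =>
    simp only [Polynomial.aeval_monomial, ← Algebra.smul_def, fromBlocks_diagonal_pow,
      fromBlocks_smul, smul_zero]

lemma cfcAlg {ι κ : Type*} [Fintype ι] [DecidableEq ι] [Fintype κ] [DecidableEq κ]
    {A : Matrix ι ι ℂ} (hA : A.IsHermitian)
    (φ : Matrix ι ι ℂ →ₐ[ℝ] Matrix κ κ ℂ) (hφ : (φ A).IsHermitian) (f : ℝ → ℝ) :
    cfc f (φ A) = φ (cfc f A) := by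
  obtain ⟨p, hp⟩ := exPoly f (A.finite_real_spectrum.union (φ A).finite_real_spectrum)
  rw [cfcPoly hA (fun x hx => hp x (Or.inl hx)),
    cfcPoly hφ (fun x hx => hp x (Or.inr hx)), Polynomial.aeval_algHom_apply]

lemma monoSum {g : ℝ → ℝ} (hg : OperatorMonotone g) {n : ℕ}
    {A B : Matrix (Fin n ⊕ Fin n) (Fin n ⊕ Fin n) ℂ} (hA : A.PosDef) (hB : B.PosDef)
    (h : (B - A).PosSemidef) : (cfc g B - cfc g A).PosSemidef := by
  let e := (finSumFinEquiv : Fin n ⊕ Fin n ≃ Fin (n+n))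
  let φ := (Matrix.reindexAlgEquiv ℝ ℂ e).toAlgHom
  have hφ : ∀ M, φ M = M.submatrix e.symm e.symm := fun M => rfl
  have hA' : (φ A).PosDef := hA.submatrix e.symm.injective
  have hB' : (φ B).PosDef := hB.submatrix e.symm.injective
  have h1 := hg _ (φ A) (φ B) hA' hB' (by
    unfold MLE; rw [← map_sub]; exact h.submatrix _)
  unfold MLE at h1
  rw [cfcAlg hA.isHermitian φ hA'.isHermitian, cfcAlg hB.isHermitian φ hB'.isHermitian,
    ← map_sub, hφ, posSemidef_submatrix_equiv] at h1
  exact h1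

lemma cfcShiftTendsto {ι : Type*} [Fintype ι] [DecidableEq ι] {M : Matrix ι ι ℂ} (hM : M.PosDef)
    {g : ℝ → ℝ} (hg : ContinuousOn g (Set.Ioi 0)) {s : ℕ → ℝ} (hs : Tendsto s atTop (𝓝 0)) :
    Tendsto (fun k => cfc g (M + s k • (1 : Matrix ι ι ℂ))) atTop (𝓝 (cfc g M)) := by
  have hsa : IsSelfAdjoint M := hM.isHermitian
  have h1 : ∀ k, cfc g (M + s k • (1 : Matrix ι ι ℂ)) = cfc (fun x => g (x + s k)) M := by
    intro k
    rw [cfc_comp' g (fun x => x + s k) M ((M.finite_real_spectrum.image _).continuousOn g)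
      (contFin _ _) hsa, cfc_add_const (s k) (fun x => x) M (contFin _ _) hsa, cfc_id' ℝ M hsa,
      Algebra.algebraMap_eq_smul_one]
  simp only [h1, hM.isHermitian.cfc_eq, IsHermitian.cfc, Unitary.conjStarAlgAut_apply]
  have h2 : Tendsto (fun k => diagonal ((RCLike.ofReal : ℝ → ℂ) ∘ (fun x => g (x + s k)) ∘
      hM.isHermitian.eigenvalues)) atTop
      (𝓝 (diagonal ((RCLike.ofReal : ℝ → ℂ) ∘ g ∘ hM.isHermitian.eigenvalues))) := by
    refine (Continuous.matrix_diagonal continuous_id).continuousAt.tendsto.comp ?_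
    rw [tendsto_pi_nhds]
    intro i
    have hi := hM.eigenvalues_pos i
    have h3 : Tendsto (fun k => hM.isHermitian.eigenvalues i + s k) atTop
        (𝓝 (hM.isHermitian.eigenvalues i)) := by
      simpa using hs.const_add (hM.isHermitian.eigenvalues i)
    have h4 : ContinuousAt g (hM.isHermitian.eigenvalues i) := hg.continuousAt (Ioi_mem_nhds hi)
    exact (Complex.continuous_ofReal.continuousAt.tendsto.comp (h4.tendsto.comp h3))
  exact (h2.const_mul _).mul_const _

lemma concaveOfMono {g : ℝ → ℝ} (hgc : ContinuousOn g (Set.Ioi 0)) (hg : OperatorMonotone g) :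
    MidConcave g := by
  intro n X Y hX hY
  set M := (2⁻¹:ℝ) • X + (2⁻¹:ℝ) • Y with hMd
  have hM : M.PosDef := (smulPd hX (by norm_num)).add (smulPd hY (by norm_num))
  set b := (2⁻¹:ℝ) • Y - (2⁻¹:ℝ) • X with hbd
  have hb : bᴴ = b := by
    rw [hbd, conjTranspose_sub, conjTranspose_smul, conjTranspose_smul, hX.isHermitian.eq,
      hY.isHermitian.eq]; simp
  let c : ℝ := √2⁻¹
  have hc : c * c = 2⁻¹ := Real.mul_self_sqrt (by norm_num)
  let V : Matrix (Fin n ⊕ Fin n) (Fin n ⊕ Fin n) ℂ := fromBlocks (c • 1) (c • 1) (-(c • 1)) (c • 1)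
  have hVs : star V = fromBlocks (c • 1) (-(c • 1)) (c • 1) (c • 1) := by
    rw [star_eq_conjTranspose, fromBlocks_conjTranspose]; simp
  have hVu : V ∈ unitary (Matrix (Fin n ⊕ Fin n) (Fin n ⊕ Fin n) ℂ) := by
    have e : (2⁻¹:ℝ) • (1 : Matrix (Fin n) (Fin n) ℂ) + (2⁻¹:ℝ) • 1 = 1 := by module
    rw [Unitary.mem_iff, hVs]
    constructor <;>
    · simp only [V, fromBlocks_multiply]
      simp [smul_smul, hc, e]
  let φ : Matrix (Fin n ⊕ Fin n) (Fin n ⊕ Fin n) ℂ →ₐ[ℝ] Matrix (Fin n ⊕ Fin n) (Fin n ⊕ Fin n) ℂ :=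
    ((Unitary.conjStarAlgAut ℝ _ ⟨V, hVu⟩).toAlgEquiv).toAlgHom
  have hφ : ∀ Z, φ Z = V * Z * star V := fun Z => rfl
  have hφb : ∀ Z W : Matrix (Fin n) (Fin n) ℂ, φ (fromBlocks Z 0 0 W) =
      fromBlocks ((2⁻¹:ℝ) • Z + (2⁻¹:ℝ) • W) ((2⁻¹:ℝ) • W - (2⁻¹:ℝ) • Z)
        ((2⁻¹:ℝ) • W - (2⁻¹:ℝ) • Z) ((2⁻¹:ℝ) • Z + (2⁻¹:ℝ) • W) := by
    intro Z W
    rw [hφ, hVs]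
    simp only [V, fromBlocks_multiply]
    simp [smul_smul, hc, sub_eq_add_neg, add_comm]
  have hP := blockPosDef hX hY
  have hφP : (φ (fromBlocks X 0 0 Y)).PosDef := by
    rw [hφ]
    have : IsUnit V := IsUnit.of_mul_eq_one _ (Unitary.mul_star_self_of_mem hVu)
    exact (Matrix.IsUnit.posDef_star_right_conjugate_iff this).2 hP
  have key : ∀ s : ℝ, 0 < s → (cfc g (M + (s * s) • (1 : Matrix (Fin n) (Fin n) ℂ)) -
      ((2⁻¹:ℝ) • cfc g X + (2⁻¹:ℝ) • cfc g Y)).PosSemidef := by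
    intro s hs
    let N := M + (s⁻¹ * s⁻¹) • (b * b)
    let Q := fromBlocks (M + (s * s) • (1 : Matrix (Fin n) (Fin n) ℂ)) 0 0 N
    have hQ : (Q - φ (fromBlocks X 0 0 Y)).PosSemidef := by
      have := posSemidef_conjTranspose_mul_self
        (fromBlocks (s • (1 : Matrix (Fin n) (Fin n) ℂ)) (-(s⁻¹ • b)) 0 0 :
          Matrix (Fin n ⊕ Fin n) (Fin n ⊕ Fin n) ℂ)
      convert this using 1
      rw [hφb, ← hMd, ← hbd, fromBlocks_conjTranspose, fromBlocks_multiply]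
      simp only [Q, N, sub_eq_add_neg, fromBlocks_neg, fromBlocks_add]
      simp [smul_smul, hs.ne', hb]
    have hQd : Q.PosDef := by
      have := hφP.add_posSemidef hQ
      simpa using this
    have h1 := monoSum hg hφP hQd hQ
    have hN : N.IsHermitian := (hQd.submatrix Sum.inr_injective).isHermitian
    have hM' : (M + (s * s) • (1 : Matrix (Fin n) (Fin n) ℂ)).IsHermitian :=
      (hQd.submatrix Sum.inl_injective).isHermitian
    rw [cfcAlg hP.isHermitian φ hφP.isHermitian, cfcBlock hX.isHermitian hY.isHermitian,
      cfcBlock hM' hN, hφb] at h1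
    exact h1.submatrix Sum.inl
  have hs : Tendsto (fun k : ℕ => (1 / ((k:ℝ) + 1)) * (1 / ((k:ℝ) + 1))) atTop (𝓝 0) := by
    simpa using (tendsto_one_div_add_atTop_nhds_zero_nat (𝕜 := ℝ)).mul
      (tendsto_one_div_add_atTop_nhds_zero_nat (𝕜 := ℝ))
  exact psdLim (fun k : ℕ => key (1 / ((k:ℝ) + 1)) (by positivity))
    ((cfcShiftTendsto hM hgc hs).sub_const _)

lemma monoInv {f : ℝ → ℝ} (hf0 : ∀ x, 0 < x → 0 < f x) (h : OperatorMonotone f) :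
    OperatorMonotone (fun x => (f x⁻¹)⁻¹) := by
  intro n A B hA hB hAB
  unfold MLE
  rw [cfcInvInv hA f hf0, cfcInvInv hB f hf0]
  exact invAnti (cfcPosDef hB.inv f hf0) (cfcPosDef hA.inv f hf0)
    (h n _ _ hB.inv hA.inv (invAnti hA hB hAB))

theorem stmt_5 (f : ℝ → ℝ) (hf : ContinuousOn f (Set.Ioi 0))
    (hf' : ∀ x ∈ Set.Ioi (0:ℝ), f x ∈ Set.Ioi (0:ℝ)) :
    OperatorMonotone f ↔
      ∀ (n : ℕ) (A B : Matrix (Fin n) (Fin n) ℂ), A.PosDef → B.PosDef →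
        MLE (cfc f (wharm 2⁻¹ A B)) (wharm 2⁻¹ (cfc f A) (cfc f B)) := by
  have hf0 : ∀ x, 0 < x → 0 < f x := hf'
  have hg0 : ∀ x, 0 < x → 0 < (f x⁻¹)⁻¹ := fun x hx => inv_pos.2 (hf0 _ (inv_pos.2 hx))
  have hgc : ContinuousOn (fun x => (f x⁻¹)⁻¹) (Set.Ioi 0) := by
    refine ContinuousOn.inv₀ (hf.comp (continuousOn_inv₀.mono ?_) ?_) ?_
    · intro x hx; exact (ne_of_gt hx)
    · intro x hx; exact Set.mem_Ioi.2 (inv_pos.2 hx)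
    · intro x hx; exact (hf0 _ (inv_pos.2 hx)).ne'
  have h12 : (1 - 2⁻¹ : ℝ) = 2⁻¹ := by norm_num
  have hpos : (0:ℝ) < 2⁻¹ := by norm_num
  constructor
  · intro h n A B hA hB
    have hc := concaveOfMono hgc (monoInv hf0 h) n A⁻¹ B⁻¹ hA.inv hB.inv
    have hS := (smulPd hA.inv hpos).add (smulPd hB.inv hpos)
    rw [cfcInvInv hS f hf0, cfcInvInv hA.inv f hf0, cfcInvInv hB.inv f hf0, invinv hA,
      invinv hB] at hc
    have hfS := cfcPosDef hS.inv f hf0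
    have hR := (smulPd (cfcPosDef hA f hf0).inv hpos).add (smulPd (cfcPosDef hB f hf0).inv hpos)
    have := invAnti hR hfS.inv hc
    rw [invinv hfS] at this
    unfold MLE wharm
    rw [h12]
    exact this
  · intro h
    have hc : MidConcave (fun x => (f x⁻¹)⁻¹) := by
      intro n X Y hX hY
      have h1 := h n X⁻¹ Y⁻¹ hX.inv hY.inv
      unfold MLE wharm at h1
      rw [h12, invinv hX, invinv hY] at h1
      have hS := (smulPd hX hpos).add (smulPd hY hpos)
      have hR := (smulPd (cfcPosDef hX.inv f hf0).inv hpos).add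
        (smulPd (cfcPosDef hY.inv f hf0).inv hpos)
      have := invAnti (cfcPosDef hS.inv f hf0) hR.inv h1
      rw [invinv hR] at this
      rw [cfcInvInv hS f hf0, cfcInvInv hX f hf0, cfcInvInv hY f hf0]
      exact this
    have := monoInv hg0 (monoOfConcave hg0 hc)
    simpa using this
end
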